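/- arXiv:2603.24884 — 3 statements merged into one kernel-verified Lean document; each statement's English description precedes it below -/
import Mathlib

section
/- For every integer n ≥ 2, the ℚ-vector space OS_n^{S_n} of S_n-invariant elements of OS_n has dimension 2n. -/
noncomputable section

/-- Unordered pairs of distinct elements of `{1, …, n+1}` (as `Fin (n+1)`). -/
abbrev OSidx (n : ℕ) := {s : Sym2 (Fin (n+1)) // ¬ s.IsDiag}

/-- The exterior algebra over `ℚ` on generators indexed by unordered pairs of distinct
elements of `{1, …, n+1}`. -/
abbrev OSamb (n : ℕ) := ExteriorAlgebra ℚ (OSidx n →₀ ℚ)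

/-- The generator `e_{ij} = e_{ji}` of the ambient exterior algebra. -/
def eAmb (n : ℕ) (i j : Fin (n+1)) (h : i ≠ j) : OSamb n :=
  ExteriorAlgebra.ι ℚ (Finsupp.single ⟨s(i,j), by simp [Sym2.mk_isDiag_iff, h]⟩ 1)

/-- The Orlik–Solomon relations for the braid arrangement. -/
inductive OSRel (n : ℕ) : OSamb n → OSamb n → Prop
  | rel (i j k : Fin (n+1)) (hij : i ≠ j) (hjk : j ≠ k) (hik : i ≠ k) :
      OSRel n (eAmb n i k hik * eAmb n j k hjk - eAmb n i j hij * eAmb n j k hjk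
        + eAmb n i j hij * eAmb n i k hik) 0

/-- The Orlik–Solomon algebra `OS_n` of the braid arrangement `A_n`. -/
abbrev OS (n : ℕ) := RingQuot (OSRel n)

/-- The generator `e_{ij}` of `OS_n`, defined to be `0` when `i = j`. -/
def eOS (n : ℕ) (i j : Fin (n+1)) : OS n :=
  if h : i = j then 0 else RingQuot.mkAlgHom ℚ (OSRel n) (eAmb n i j h)

/-- `a = Σ_{1 ≤ i < j ≤ n} e_{ij}`. -/
def aOS (n : ℕ) : OS n :=
  ∑ p ∈ Finset.univ.filter (fun p : Fin n × Fin n => p.1 < p.2),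
    eOS n p.1.castSucc p.2.castSucc

/-- `m = Σ_{1 ≤ i ≤ n} e_{i,n+1}`. -/
def mOS (n : ℕ) : OS n := ∑ i : Fin n, eOS n i.castSucc (Fin.last n)

/-- `c = Σ_{1 ≤ i < j ≤ n} (e_{ij} e_{i,n+1} + e_{ij} e_{j,n+1})`. -/
def cOS (n : ℕ) : OS n :=
  ∑ p ∈ Finset.univ.filter (fun p : Fin n × Fin n => p.1 < p.2),
    (eOS n p.1.castSucc p.2.castSucc * eOS n p.1.castSucc (Fin.last n)
      + eOS n p.1.castSucc p.2.castSucc * eOS n p.2.castSucc (Fin.last n))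

/-- `g = a·m − p·c` with `p = ⌊(n+1)/2⌋`. -/
def gOS (n : ℕ) : OS n := aOS n * mOS n - ((n+1)/2 : ℕ) • cOS n

/-- The action of a permutation on the index set of unordered pairs. -/
def OSpermIdx (n : ℕ) (σ : Equiv.Perm (Fin (n+1))) : OSidx n → OSidx n :=
  fun s => ⟨Sym2.map σ s.1, by
    obtain ⟨⟨x, y⟩, hs⟩ := s
    intro hd
    rw [Sym2.map_pair_eq, Sym2.mk_isDiag_iff] at hd
    exact hs (Sym2.mk_isDiag_iff.mpr (σ.injective hd))⟩

/-- The algebra endomorphism of the ambient exterior algebra induced by a permutation. -/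
def OSpermAmb (n : ℕ) (σ : Equiv.Perm (Fin (n+1))) : OSamb n →ₐ[ℚ] OSamb n :=
  ExteriorAlgebra.lift ℚ
    ⟨(ExteriorAlgebra.ι ℚ).comp (Finsupp.lmapDomain ℚ ℚ (OSpermIdx n σ)),
      fun m => by simp [ExteriorAlgebra.ι_sq_zero]⟩

lemma OSpermAmb_e (n : ℕ) (σ : Equiv.Perm (Fin (n+1))) (i j : Fin (n+1)) (h : i ≠ j) :
    OSpermAmb n σ (eAmb n i j h) = eAmb n (σ i) (σ j) (fun hh => h (σ.injective hh)) := by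
  simp only [OSpermAmb, eAmb, ExteriorAlgebra.lift_ι_apply, LinearMap.comp_apply,
    Finsupp.lmapDomain_apply, Finsupp.mapDomain_single]
  congr 1

/-- The algebra endomorphism of `OS_n` induced by a permutation of `{1, …, n+1}`. -/
def OSperm (n : ℕ) (σ : Equiv.Perm (Fin (n+1))) : OS n →ₐ[ℚ] OS n :=
  RingQuot.liftAlgHom ℚ
    ⟨(RingQuot.mkAlgHom ℚ (OSRel n)).comp (OSpermAmb n σ), by
      intro x y h
      cases h with
      | rel i j k hij hjk hik =>
        simp only [AlgHom.comp_apply, map_sub, map_add, map_mul, map_zero, OSpermAmb_e]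
        have := RingQuot.mkAlgHom_rel ℚ (OSRel.rel (σ i) (σ j) (σ k)
          (fun hh => hij (σ.injective hh)) (fun hh => hjk (σ.injective hh))
          (fun hh => hik (σ.injective hh)))
        simpa [map_sub, map_add, map_mul] using this⟩

/-- The subalgebra of `S_n`-invariants of `OS_n`, where `S_n` is the subgroup of permutations
of `{1, …, n+1}` fixing `n+1`. -/
def OSinv (n : ℕ) : Subalgebra ℚ (OS n) where
  carrier := {x | ∀ σ : Equiv.Perm (Fin (n+1)), σ (Fin.last n) = Fin.last n → OSperm n σ x = x}
  mul_mem' := fun hx hy σ hσ => by rw [map_mul, hx σ hσ, hy σ hσ]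
  add_mem' := fun hx hy σ hσ => by rw [map_add, hx σ hσ, hy σ hσ]
  one_mem' := fun σ _ => map_one _
  zero_mem' := fun σ _ => map_zero _
  algebraMap_mem' := fun r σ hσ => AlgHom.commutes _ r

/-- The subalgebra of `S_{n+1}`-invariants of `OS_n`. -/
def OSinvFull (n : ℕ) : Subalgebra ℚ (OS n) where
  carrier := {x | ∀ σ : Equiv.Perm (Fin (n+1)), OSperm n σ x = x}
  mul_mem' := fun hx hy σ => by rw [map_mul, hx σ, hy σ]
  add_mem' := fun hx hy σ => by rw [map_add, hx σ, hy σ]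
  one_mem' := fun σ => map_one _
  zero_mem' := fun σ => map_zero _
  algebraMap_mem' := fun r σ => AlgHom.commutes _ r

/-- The degree-`d` graded piece of `OS_n`: the image in `OS_n` of the degree-`d` component of
the exterior algebra. -/
def OSdeg (n : ℕ) (d : ℕ) : Submodule ℚ (OS n) :=
  Submodule.map (RingQuot.mkAlgHom ℚ (OSRel n)).toLinearMap
    ((LinearMap.range (ExteriorAlgebra.ι ℚ : (OSidx n →₀ ℚ) →ₗ[ℚ] OSamb n)) ^ d)

/-- The degree-`d` graded piece of the invariant subalgebra `OS_n^{S_n}`. -/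
def OSinvDeg (n : ℕ) (d : ℕ) : Submodule ℚ (OS n) :=
  Subalgebra.toSubmodule (OSinv n) ⊓ OSdeg n d

/-!
By the three-term relations, monomials of linear forests (disjoint unions of paths) span `OS_n`,
and one may take the root `n + 1` to be an endpoint of its path. Invariants are images of the
symmetrization over `S_n`, which only remembers the sizes of the components of a forest. It kills
a forest with a component of at least two edges away from the root, since a path relabelled in all
ways satisfies `s • x = -x` with `s ≥ 0` a sum of shuffle signs; and it kills a forest with two
single edges away from the root, since swapping these edges changes the sign. What remains are
root paths with `k ≤ n` edges, and root paths with `k ≤ n - 2` edges together with one more edge: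
`(n + 1) + (n - 1) = 2 n` generators.

For independence, send `e_{ij}` to the generator `f_{min i j}` of an exterior algebra. A path
`n + 1 > v₁ > ⋯ > v_k` goes to `f_{v₁} ⋯ f_{v_k}`, and for suitable monomials all terms of the
symmetrization contribute either `0` or one and the same nonzero coefficient, so nothing cancels.
-/

namespace OrlikSolomon

section Lists

lemma exists_perm_cons_of_mem_flatten {α : Type*} {a : α} {LL : List (List α)}
    (ha : a ∈ LL.flatten) : ∃ L LL', a ∈ L ∧ LL.Perm (L :: LL') := by
  classical
  obtain ⟨L, hL, haL⟩ := List.mem_flatten.1 ha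
  exact ⟨L, LL.erase L, haL, List.perm_cons_erase hL⟩

lemma exists_perm_map_eq {α : Type*} {L L' : List α} (hL : L.Nodup) (hL' : L'.Nodup)
    (hlen : L.length = L'.length) : ∃ σ : Equiv.Perm α, L.map σ = L' := by
  obtain ⟨σ, hσ⟩ := Equiv.Perm.exists_extending_pair L.get (L'.get ∘ Fin.cast hlen)
    hL.injective_get (hL'.injective_get.comp (Fin.cast_injective hlen))
  exact ⟨σ, List.ext_get (by simpa) fun i hi _ => by simpa using hσ ⟨i, by simpa using hi⟩⟩

lemma nodup_flatten_map_map {α β : Type*} {f : α → β} (hf : Function.Injective f)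
    {LL : List (List α)} (hLL : LL.flatten.Nodup) : (LL.map (List.map f)).flatten.Nodup := by
  rw [← List.map_flatten]
  exact hLL.map hf

end Lists

section LinearAlgebra

lemma mul_mem_span_singleton {R A : Type*} [CommSemiring R] [Semiring A] [Algebra R A]
    {x x' y y' : A} (hx : x ∈ R ∙ x') (hy : y ∈ R ∙ y') : x * y ∈ R ∙ (x' * y') := by
  simpa [Submodule.span_mul_span] using Submodule.mul_mem_mul hx hy

lemma sum_ne_zero_of_forall_eq_zero_or_eq {ι R : Type*} [Fintype ι] [Ring R] [LinearOrder R]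
    [IsStrictOrderedRing R] {f : ι → R} {c : R} (hf : ∀ i, f i = 0 ∨ f i = c) {i : ι}
    (hi : f i ≠ 0) : ∑ i, f i ≠ 0 := by
  have nonneg (j : ι) : 0 ≤ c * f j := by
    rcases hf j with h | h <;> simp [h, mul_self_nonneg]
  have pos : 0 < c * f i := by
    rw [← (hf i).resolve_left hi]
    exact mul_self_pos.2 hi
  intro hsum
  have := Finset.sum_pos' (fun j _ => nonneg j) ⟨i, Finset.mem_univ i, pos⟩
  rw [← Finset.mul_sum, hsum, mul_zero] at this
  exact this.false

lemma eq_zero_of_forall_dual_linearCombination_eq_zero {R M ι : Type*} [CommRing R]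
    [NoZeroDivisors R] [AddCommGroup M] [Module R M] {v : ι → M} {φ : ι → Module.Dual R M}
    (hφ : ∀ i j, φ i (v j) = 0 ↔ i ≠ j) {c : ι →₀ R}
    (hc : ∀ i, φ i (Finsupp.linearCombination R v c) = 0) : c = 0 := by
  ext i
  have diag : φ i (Finsupp.linearCombination R v c) = c i * φ i (v i) := by
    rw [Finsupp.apply_linearCombination, Finsupp.linearCombination_apply]
    refine Finsupp.sum_eq_single i (fun j _ hj => ?_) (by simp)
    simp [(hφ i j).2 hj.symm]
  exact (mul_eq_zero.1 (diag.symm.trans (hc i))).resolve_right fun h => (hφ i i).1 h rfl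

lemma linearIndependent_sumElim_of_dual {R M ι κ : Type*} [CommRing R] [NoZeroDivisors R]
    [AddCommGroup M] [Module R M] {v : ι → M} {w : κ → M} {φ : ι → Module.Dual R M}
    {ψ : κ → Module.Dual R M} (φ_v : ∀ i j, φ i (v j) = 0 ↔ i ≠ j)
    (ψ_w : ∀ i j, ψ i (w j) = 0 ↔ i ≠ j) (φ_w : ∀ i j, φ i (w j) = 0) :
    LinearIndependent R (Sum.elim v w) := by
  have hv : LinearIndependent R v := linearIndependent_iff.2 fun c hc =>
    eq_zero_of_forall_dual_linearCombination_eq_zero φ_v fun i => by rw [hc, map_zero]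
  have hw : LinearIndependent R w := linearIndependent_iff.2 fun c hc =>
    eq_zero_of_forall_dual_linearCombination_eq_zero ψ_w fun i => by rw [hc, map_zero]
  refine hv.sum_type hw (Submodule.disjoint_def.2 fun x hxv hxw => ?_)
  obtain ⟨c, rfl⟩ := (Finsupp.mem_span_range_iff_exists_finsupp).1 hxv
  have hc : c = 0 := eq_zero_of_forall_dual_linearCombination_eq_zero φ_v fun i =>
    (Submodule.span_le.2 (Set.range_subset_iff.2 (φ_w i)) :
      Submodule.span R (Set.range w) ≤ LinearMap.ker (φ i)) hxw
  simp [hc]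

end LinearAlgebra

section SignedShuffle

variable {α : Type*}

/-- The signed shuffle product of two lists, as a formal combination of lists: each shuffle carries
the sign of the permutation interleaving the two lists. -/
def signedShuffle : List α → List α → List α →₀ ℚ
  | [], C => Finsupp.single C 1
  | B, [] => Finsupp.single B 1
  | a :: B, b :: C =>
    (signedShuffle B (b :: C)).mapDomain (List.cons a) +
      (-1 : ℚ) ^ (B.length + 1) • (signedShuffle (a :: B) C).mapDomain (List.cons b)
termination_by B C => B.length + C.length

@[simp]
lemma signedShuffle_nil_left (C : List α) : signedShuffle [] C = Finsupp.single C 1 := by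
  rw [signedShuffle]

@[simp]
lemma signedShuffle_nil_right (B : List α) : signedShuffle B [] = Finsupp.single B 1 := by
  cases B <;> simp [signedShuffle]

lemma signedShuffle_cons_cons (a b : α) (B C : List α) :
    signedShuffle (a :: B) (b :: C) =
      (signedShuffle B (b :: C)).mapDomain (List.cons a) +
        (-1 : ℚ) ^ (B.length + 1) • (signedShuffle (a :: B) C).mapDomain (List.cons b) := by
  rw [signedShuffle]

lemma perm_of_mem_support_signedShuffle (B C : List α) {D : List α}
    (hD : D ∈ (signedShuffle B C).support) : D.Perm (B ++ C) := by
  classical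
  induction B, C using signedShuffle.induct generalizing D with
  | case1 C => simp_all
  | case2 B => simp_all
  | case3 a B b C ih₁ ih₂ =>
    rw [signedShuffle_cons_cons] at hD
    rcases Finset.mem_union.1 (Finsupp.support_add hD) with h | h
    · obtain ⟨D', hD', rfl⟩ := Finset.mem_image.1 (Finsupp.mapDomain_support h)
      exact (ih₁ hD').cons a
    · obtain ⟨D', hD', rfl⟩ :=
        Finset.mem_image.1 (Finsupp.mapDomain_support (Finsupp.support_smul h))
      exact ((ih₂ hD').cons b).trans List.perm_middle.symm

/-- The sum of the signs of all shuffles of two lists. -/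
def shuffleSignSum (B C : List α) : ℚ :=
  Finsupp.linearCombination ℚ (fun _ => (1 : ℚ)) (signedShuffle B C)

@[simp]
lemma shuffleSignSum_nil_left (C : List α) : shuffleSignSum [] C = 1 := by simp [shuffleSignSum]

@[simp]
lemma shuffleSignSum_nil_right (B : List α) : shuffleSignSum B [] = 1 := by simp [shuffleSignSum]

lemma shuffleSignSum_cons_cons (a b : α) (B C : List α) :
    shuffleSignSum (a :: B) (b :: C) =
      shuffleSignSum B (b :: C) + (-1) ^ (B.length + 1) * shuffleSignSum (a :: B) C := by
  simp only [shuffleSignSum, signedShuffle_cons_cons, map_add, map_smul,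
    Finsupp.linearCombination_mapDomain, smul_eq_mul]
  rfl

lemma shuffleSignSum_singleton (a : α) (C : List α) :
    shuffleSignSum [a] C = 0 ∨ shuffleSignSum [a] C = 1 := by
  induction C with
  | nil => simp
  | cons c C ih => rcases ih with h | h <;> simp [shuffleSignSum_cons_cons, h]

lemma shuffleSignSum_pair_nonneg (a b : α) (C : List α) : 0 ≤ shuffleSignSum [a, b] C := by
  induction C with
  | nil => simp
  | cons c C ih =>
    have step : shuffleSignSum [a, b] (c :: C) =
        shuffleSignSum [b] (c :: C) + shuffleSignSum [a, b] C := by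
      simp [shuffleSignSum_cons_cons a]
    rcases shuffleSignSum_singleton b (c :: C) with h | h <;> linarith

end SignedShuffle

section ExteriorMonomial

variable {R M I : Type*} [CommRing R] [AddCommGroup M] [Module R M]

variable (R) in
/-- The monomial `b i₁ ∧ ⋯ ∧ b i_k` of the exterior algebra for the list `[i₁, …, i_k]`. -/
def wedge (b : I → M) (K : List I) : ExteriorAlgebra R M :=
  (K.map fun i => ExteriorAlgebra.ι R (b i)).prod

lemma wedge_eq_zero (b : I → M) {K : List I} (hK : ¬K.Nodup) : wedge R b K = 0 := by
  have eq_ιMulti : wedge R b K = ExteriorAlgebra.ιMulti R K.length (b ∘ K.get) := by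
    rw [ExteriorAlgebra.ιMulti_apply]
    exact congrArg List.prod (List.ext_get (by simp) (by simp))
  rw [eq_ιMulti]
  refine AlternatingMap.map_eq_zero_of_not_injective _ _ fun hinj => ?_
  exact hK (List.nodup_iff_injective_get.2 hinj.of_comp)

lemma wedge_mem_span_of_perm (b : I → M) {K K' : List I} (h : K.Perm K') :
    wedge R b K ∈ R ∙ wedge R b K' := by
  induction h with
  | nil => exact Submodule.mem_span_singleton_self _
  | cons i _ ih =>
    simpa [wedge] using mul_mem_span_singleton (Submodule.mem_span_singleton_self _) ih
  | swap i j K =>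
    have anticomm : wedge R b (j :: i :: K) = -wedge R b (i :: j :: K) := by
      simp only [wedge, List.map_cons, List.prod_cons, ← mul_assoc]
      rw [eq_neg_of_add_eq_zero_left (ExteriorAlgebra.ι_add_mul_swap (b j) (b i)), neg_mul]
    rw [anticomm]
    exact Submodule.neg_mem _ (Submodule.mem_span_singleton_self _)
  | trans _ _ ih₁ ih₂ => exact Submodule.mem_span_singleton_trans ih₁ ih₂

lemma wedge_min_relation [LinearOrder I] (b : I → M) (i j k : I) :
    wedge R b [min i k, min j k] - wedge R b [min i j, min j k] + wedge R b [min i j, min i k] =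
      0 := by
  have repeated (a : I) : wedge R b [a, a] = 0 := wedge_eq_zero b (by simp)
  have swap (a c : I) : wedge R b [a, c] = -wedge R b [c, a] := by
    simpa [wedge] using eq_neg_of_add_eq_zero_left (ExteriorAlgebra.ι_add_mul_swap (b a) (b c))
  have least : (i ≤ j ∧ i ≤ k) ∨ (j ≤ i ∧ j ≤ k) ∨ (k ≤ i ∧ k ≤ j) := by grind
  rcases least with ⟨h, h'⟩ | ⟨h, h'⟩ | ⟨h, h'⟩
  · simp [h, h', repeated]
  · simp [h, h', repeated, swap _ j]
  · simp [h, h', repeated]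

variable [LinearOrder I] (b : Module.Basis I R M)

lemma exteriorAlgebra_basis_eq_wedge (S : Finset I) :
    b.ExteriorAlgebra S = wedge R b S.sort := by
  rw [ExteriorAlgebra.basis_apply_ofCard b (rfl : S.card = S.card),
    ExteriorAlgebra.ιMulti_family, ExteriorAlgebra.ιMulti_apply, wedge,
    ← Finset.listMap_orderEmbOfFin_finRange S rfl, List.map_map, List.ofFn_eq_map]
  rfl

lemma coord_wedge_ne_zero_iff [Nontrivial R] {S : Finset I} {K : List I} :
    b.ExteriorAlgebra.coord S (wedge R b K) ≠ 0 ↔ K.Nodup ∧ K.toFinset = S := by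
  by_cases hK : K.Nodup
  swap
  · simp [wedge_eq_zero b hK, hK]
  have hperm : K.toFinset.sort.Perm K :=
    (List.perm_ext_iff_of_nodup (Finset.sort_nodup _ _) hK).2 (by simp)
  have basis_mem := wedge_mem_span_of_perm (R := R) b hperm
  have mem_basis := wedge_mem_span_of_perm (R := R) b hperm.symm
  rw [← exteriorAlgebra_basis_eq_wedge] at basis_mem mem_basis
  refine ⟨fun h => ⟨hK, ?_⟩, ?_⟩
  · obtain ⟨c, hc⟩ := Submodule.mem_span_singleton.1 mem_basis
    by_contra hne
    exact h (by simp [← hc, hne])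
  · rintro ⟨-, rfl⟩ h
    obtain ⟨c, hc⟩ := Submodule.mem_span_singleton.1 basis_mem
    simpa [h] using congrArg (b.ExteriorAlgebra.coord K.toFinset) hc

end ExteriorMonomial

section ConsecutiveMin

variable {I : Type*} [LinearOrder I]

/-- The minima of the pairs of consecutive entries of a list. -/
def consecutiveMin : List I → List I
  | [] => []
  | [_] => []
  | a :: b :: L => min a b :: consecutiveMin (b :: L)

@[simp] lemma consecutiveMin_nil : consecutiveMin ([] : List I) = [] := rfl

@[simp] lemma consecutiveMin_singleton (a : I) : consecutiveMin [a] = [] := rfl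

@[simp]
lemma consecutiveMin_cons_cons (a b : I) (L : List I) :
    consecutiveMin (a :: b :: L) = min a b :: consecutiveMin (b :: L) := rfl

@[simp]
lemma length_consecutiveMin (L : List I) : (consecutiveMin L).length = L.length - 1 := by
  induction L with
  | nil => rfl
  | cons a L ih => cases L <;> simp_all

lemma consecutiveMin_cons_of_isChain {a : I} {L : List I} (h : (a :: L).IsChain (· > ·)) :
    consecutiveMin (a :: L) = L := by
  induction L generalizing a with
  | nil => rfl
  | cons b L ih =>
    obtain ⟨hab, hL⟩ := List.isChain_cons_cons.1 h
    rw [consecutiveMin_cons_cons, min_eq_right hab.le, ih hL]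

/-- After a descent `a > b`, an ascent `b < c` would repeat the minimum `b`. -/
lemma isChain_of_nodup_consecutiveMin {a b : I} {L : List I} (hab : b < a)
    (hL : (b :: L).Nodup) (h : (consecutiveMin (a :: b :: L)).Nodup) :
    (a :: b :: L).IsChain (· > ·) := by
  induction L generalizing a b with
  | nil => simpa using hab
  | cons c L ih =>
    have hcb : c < b := by
      refine lt_of_le_of_ne (not_lt.1 fun hbc => ?_) ?_
      · simp [hab.le, hbc.le] at h
      · rintro rfl
        simp at hL
    exact .cons_cons hab (ih hcb hL.of_cons h.of_cons)

end ConsecutiveMin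

variable {n : ℕ}

section Generators

lemma eOS_comm (i j : Fin (n + 1)) : eOS n i j = eOS n j i := by
  by_cases h : i = j
  · rw [h]
  · simp only [eOS, dif_neg h, dif_neg (Ne.symm h), eAmb, Sym2.eq_swap]

@[simp]
lemma eOS_self (i : Fin (n + 1)) : eOS n i i = 0 := by simp [eOS]

lemma eOS_of_ne {i j : Fin (n + 1)} (h : i ≠ j) :
    eOS n i j = RingQuot.mkAlgHom ℚ (OSRel n) (eAmb n i j h) := dif_neg h

@[simp]
lemma eOS_mul_self (i j : Fin (n + 1)) : eOS n i j * eOS n i j = 0 := by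
  by_cases h : i = j
  · simp [h]
  · rw [eOS_of_ne h, ← map_mul, eAmb, ExteriorAlgebra.ι_sq_zero, map_zero]

lemma eOS_mul_eOS_swap (i j k l : Fin (n + 1)) :
    eOS n i j * eOS n k l = -(eOS n k l * eOS n i j) := by
  by_cases h : i = j
  · simp [h]
  by_cases h' : k = l
  · simp [h']
  rw [eOS_of_ne h, eOS_of_ne h', ← map_mul, ← map_mul, ← map_neg]
  exact congrArg _ (eq_neg_of_add_eq_zero_left (ExteriorAlgebra.ι_add_mul_swap _ _))

lemma eOS_relation (i j k : Fin (n + 1)) :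
    eOS n i k * eOS n j k - eOS n i j * eOS n j k + eOS n i j * eOS n i k = 0 := by
  by_cases hij : i = j
  · simp [hij]
  by_cases hjk : j = k
  · simp [hjk]
  by_cases hik : i = k
  · simp [hik, eOS_comm j k]
  simpa [eOS, hij, hjk, hik] using RingQuot.mkAlgHom_rel ℚ (OSRel.rel i j k hij hjk hik)

lemma eOS_mul_eOS (v a b : Fin (n + 1)) :
    eOS n v a * eOS n v b = eOS n v a * eOS n a b - eOS n v b * eOS n a b := by
  have h := eOS_relation v a b
  rw [← sub_eq_zero, ← h]
  abel

@[simp]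
lemma OSperm_eOS (σ : Equiv.Perm (Fin (n + 1))) (i j : Fin (n + 1)) :
    OSperm n σ (eOS n i j) = eOS n (σ i) (σ j) := by
  by_cases h : i = j
  · simp [h]
  · rw [eOS_of_ne h, eOS_of_ne (σ.injective.ne h), OSperm, RingQuot.liftAlgHom_mkAlgHom_apply,
      AlgHom.comp_apply, OSpermAmb_e]

lemma ι_single_mem_adjoin (s : OSidx n) (r : ℚ) :
    RingQuot.mkAlgHom ℚ (OSRel n) (ExteriorAlgebra.ι ℚ (Finsupp.single s r)) ∈
      Algebra.adjoin ℚ (Set.range fun p : Fin (n + 1) × Fin (n + 1) => eOS n p.1 p.2) := by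
  obtain ⟨⟨i, j⟩, hs⟩ := s
  have hij : i ≠ j := hs
  rw [← mul_one r, ← smul_eq_mul, ← Finsupp.smul_single, map_smul, map_smul]
  exact Subalgebra.smul_mem _ (Algebra.subset_adjoin (Set.mem_range.2 ⟨(i, j), eOS_of_ne hij⟩)) r

lemma adjoin_eOS :
    Algebra.adjoin ℚ (Set.range fun p : Fin (n + 1) × Fin (n + 1) => eOS n p.1 p.2) = ⊤ := by
  refine Algebra.eq_top_iff.2 fun x => ?_
  obtain ⟨x, rfl⟩ := RingQuot.mkAlgHom_surjective ℚ (OSRel n) x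
  induction x using ExteriorAlgebra.induction with
  | algebraMap r => simp
  | ι f =>
    induction f using Finsupp.induction_linear with
    | zero => simp
    | add f g hf hg => simpa using add_mem hf hg
    | single s r => exact ι_single_mem_adjoin s r
  | mul a b ha hb => simpa using mul_mem ha hb
  | add a b ha hb => simpa using add_mem ha hb

lemma algHom_ext {B : Type*} [Semiring B] [Algebra ℚ B] {f g : OS n →ₐ[ℚ] B}
    (h : ∀ i j, f (eOS n i j) = g (eOS n i j)) : f = g :=
  AlgHom.ext_of_adjoin_eq_top adjoin_eOS (by rintro _ ⟨⟨i, j⟩, rfl⟩; exact h i j)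

lemma mem_of_one_mem_of_eOS_mul_mem {p : Submodule ℚ (OS n)} (one_mem : 1 ∈ p)
    (eOS_mul_mem : ∀ i j, ∀ y ∈ p, eOS n i j * y ∈ p) (x : OS n) : x ∈ p := by
  have hx : x ∈ Algebra.adjoin ℚ (Set.range fun p : Fin (n + 1) × Fin (n + 1) => eOS n p.1 p.2) :=
    adjoin_eOS ▸ Algebra.mem_top
  suffices ∀ y ∈ p, x * y ∈ p by simpa using this 1 one_mem
  induction hx using Algebra.adjoin_induction with
  | mem x hx => obtain ⟨⟨i, j⟩, rfl⟩ := hx; exact eOS_mul_mem i j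
  | algebraMap r => intro y hy; simpa [← Algebra.smul_def] using p.smul_mem r hy
  | add a b _ _ ha hb => intro y hy; simpa [add_mul] using p.add_mem (ha y hy) (hb y hy)
  | mul a b _ _ ha hb => intro y hy; simpa [mul_assoc] using ha _ (hb y hy)

end Generators

section Symmetrization

/-- The subgroup `S_n` of permutations of `{1, …, n+1}` fixing the last point. -/
abbrev rootStabilizer (n : ℕ) : Subgroup (Equiv.Perm (Fin (n + 1))) :=
  MulAction.stabilizer _ (Fin.last n)

/-- The action of `S_n` on `OS_n` as a representation. -/
def rootRep (n : ℕ) : Representation ℚ (rootStabilizer n) (OS n) where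
  toFun σ := (OSperm n σ).toLinearMap
  map_one' := congrArg AlgHom.toLinearMap
    (algHom_ext (g := AlgHom.id ℚ (OS n)) fun i j => by simp)
  map_mul' σ τ := congrArg AlgHom.toLinearMap
    (algHom_ext (g := (OSperm n σ).comp (OSperm n τ)) fun i j => by simp)

lemma rootRep_apply (σ : rootStabilizer n) (x : OS n) : rootRep n σ x = OSperm n σ x := rfl

/-- The (unnormalized) symmetrization over `S_n`. -/
def sym (n : ℕ) : OS n →ₗ[ℚ] OS n := (rootRep n).norm

lemma sym_apply (x : OS n) : sym n x = ∑ σ : rootStabilizer n, OSperm n σ x := by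
  simp [sym, Representation.norm, rootRep_apply]

lemma sym_OSperm {σ : Equiv.Perm (Fin (n + 1))} (hσ : σ (Fin.last n) = Fin.last n) (x : OS n) :
    sym n (OSperm n σ x) = sym n x :=
  (rootRep n).norm_self_apply ⟨σ, hσ⟩ x

lemma range_sym : LinearMap.range (sym n) = Subalgebra.toSubmodule (OSinv n) := by
  apply le_antisymm
  · rintro _ ⟨x, rfl⟩ σ hσ
    exact (rootRep n).self_norm_apply ⟨σ, hσ⟩ x
  · intro x hx
    have hsym : sym n x = (Fintype.card (rootStabilizer n) : ℚ) • x := by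
      rw [sym_apply, Finset.sum_congr rfl fun σ _ => hx σ.1 σ.2]
      simp [Nat.cast_smul_eq_nsmul]
    refine ⟨(Fintype.card (rootStabilizer n) : ℚ)⁻¹ • x, ?_⟩
    rw [map_smul, hsym, inv_smul_smul₀ (Nat.cast_ne_zero.2 Fintype.card_ne_zero)]

end Symmetrization

section Path

/-- The monomial `e_{v₀v₁} e_{v₁v₂} ⋯ e_{v_{k-1}v_k}` of the path `v₀, …, v_k`. -/
def path : List (Fin (n + 1)) → OS n
  | [] => 1
  | [_] => 1
  | a :: b :: L => eOS n a b * path (b :: L)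

@[simp] lemma path_nil : path ([] : List (Fin (n + 1))) = 1 := rfl

@[simp] lemma path_singleton (a : Fin (n + 1)) : path [a] = 1 := rfl

@[simp]
lemma path_cons_cons (a b : Fin (n + 1)) (L : List (Fin (n + 1))) :
    path (a :: b :: L) = eOS n a b * path (b :: L) := rfl

lemma path_append_cons (P : List (Fin (n + 1))) (v : Fin (n + 1)) (Q : List (Fin (n + 1))) :
    path (P ++ v :: Q) = path (P ++ [v]) * path (v :: Q) := by
  induction P with
  | nil => simp
  | cons a P ih => cases P <;> simp_all [mul_assoc]

lemma OSperm_path (σ : Equiv.Perm (Fin (n + 1))) (L : List (Fin (n + 1))) :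
    OSperm n σ (path L) = path (L.map σ) := by
  induction L with
  | nil => simp
  | cons a L ih => cases L <;> simp_all

lemma path_mul_eOS (v : Fin (n + 1)) (B : List (Fin (n + 1))) (i j : Fin (n + 1)) :
    path (v :: B) * eOS n i j = (-1 : ℚ) ^ B.length • (eOS n i j * path (v :: B)) := by
  induction B generalizing v with
  | nil => simp
  | cons b B ih =>
    rw [path_cons_cons, mul_assoc, ih, mul_smul_comm, ← mul_assoc, eOS_mul_eOS_swap v b,
      List.length_cons, pow_succ]
    simp [mul_assoc]

lemma eOS_mul_path (v : Fin (n + 1)) (B : List (Fin (n + 1))) (i j : Fin (n + 1)) :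
    eOS n i j * path (v :: B) = (-1 : ℚ) ^ B.length • (path (v :: B) * eOS n i j) := by
  rw [path_mul_eOS, smul_smul, ← mul_pow]
  simp

lemma path_mul_path_swap (u v : Fin (n + 1)) (B C : List (Fin (n + 1))) :
    path (u :: B) * path (v :: C) =
      (-1 : ℚ) ^ (B.length * C.length) • (path (v :: C) * path (u :: B)) := by
  induction C generalizing v with
  | nil => simp
  | cons c C ih =>
    rw [path_cons_cons, ← mul_assoc, path_mul_eOS, smul_mul_assoc, mul_assoc, ih, mul_smul_comm,
      smul_smul, ← pow_add, ← mul_assoc, List.length_cons, Nat.mul_succ, add_comm]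

lemma path_mul_path_mem_span_swap (L L' : List (Fin (n + 1))) :
    path L * path L' ∈ ℚ ∙ (path L' * path L) := by
  rcases L with _ | ⟨u, B⟩
  · simp
  rcases L' with _ | ⟨v, C⟩
  · simp
  · exact Submodule.mem_span_singleton.2 ⟨_, (path_mul_path_swap u v B C).symm⟩

lemma path_reverse_mem_span (L : List (Fin (n + 1))) : path L.reverse ∈ ℚ ∙ path L := by
  match L with
  | [] | [_] => simp
  | a :: b :: L =>
    have split : path (a :: b :: L).reverse = path (b :: L).reverse * path [b, a] := by
      simpa using path_append_cons L.reverse b [a]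
    have swap : path (b :: L) * path [b, a] ∈ ℚ ∙ path (a :: b :: L) := by
      simpa [eOS_comm b a] using path_mul_path_mem_span_swap (b :: L) [b, a]
    rw [split]
    exact Submodule.mem_span_singleton_trans
      (mul_mem_span_singleton (path_reverse_mem_span (b :: L))
        (Submodule.mem_span_singleton_self _)) swap

end Path

section ShuffleProduct

lemma linearCombination_path_mapDomain_cons (v a : Fin (n + 1))
    (x : List (Fin (n + 1)) →₀ ℚ) :
    Finsupp.linearCombination ℚ (fun D => path (v :: D)) (x.mapDomain (List.cons a)) =
      eOS n v a * Finsupp.linearCombination ℚ (fun D => path (a :: D)) x :=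
  (Finsupp.linearCombination_mapDomain ℚ _ x).trans
    (Finsupp.apply_linearCombination ℚ (LinearMap.mulLeft ℚ (eOS n v a)) _ x).symm

theorem path_mul_path (v : Fin (n + 1)) (B C : List (Fin (n + 1))) :
    path (v :: B) * path (v :: C) =
      Finsupp.linearCombination ℚ (fun D => path (v :: D)) (signedShuffle B C) := by
  induction B, C using signedShuffle.induct generalizing v with
  | case1 C => simp
  | case2 B => simp
  | case3 a B b C ih₁ ih₂ =>
    have sign_sq : (-1 : ℚ) ^ B.length * (-1) ^ B.length = 1 := by rw [← mul_pow]; simp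
    have move : path (v :: a :: B) * path (v :: b :: C) =
        (-1 : ℚ) ^ B.length • (eOS n v a * eOS n v b * (path (a :: B) * path (b :: C))) := by
      simp only [path_cons_cons, mul_assoc]
      rw [← mul_assoc (path (a :: B)), path_mul_eOS]
      simp only [smul_mul_assoc, mul_smul_comm, mul_assoc]
    have first : (-1 : ℚ) ^ B.length • (eOS n a b * (path (a :: B) * path (b :: C))) =
        path (a :: B) * path (a :: b :: C) := by
      rw [← mul_assoc, eOS_mul_path, smul_mul_assoc, smul_smul, sign_sq, one_smul, mul_assoc,
        path_cons_cons]
    have second : eOS n a b * (path (a :: B) * path (b :: C)) =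
        path (b :: a :: B) * path (b :: C) := by
      rw [path_cons_cons, eOS_comm b a, mul_assoc]
    rw [signedShuffle_cons_cons, map_add, map_smul, linearCombination_path_mapDomain_cons,
      linearCombination_path_mapDomain_cons, ← ih₁, ← ih₂, move, eOS_mul_eOS, ← first, ← second]
    simp only [sub_mul, smul_sub, mul_smul_comm, mul_assoc, pow_succ, mul_neg, mul_one, neg_smul]
    abel

/-- The span of the monomials of the paths starting at `v` with vertices the entries of `L`. -/
def rootedSpan (v : Fin (n + 1)) (L : List (Fin (n + 1))) : Submodule ℚ (OS n) :=
  Submodule.span ℚ {x | ∃ B, (v :: B).Perm L ∧ path (v :: B) = x}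

lemma path_mem_rootedSpan {v : Fin (n + 1)} {L : List (Fin (n + 1))} (hv : v ∈ L) :
    path L ∈ rootedSpan v L := by
  obtain ⟨P, Q, rfl⟩ := List.append_of_mem hv
  have flip : path (P ++ v :: Q) ∈ ℚ ∙ (path (v :: P.reverse) * path (v :: Q)) := by
    rw [path_append_cons]
    refine mul_mem_span_singleton ?_ (Submodule.mem_span_singleton_self _)
    simpa using path_reverse_mem_span (v :: P.reverse)
  refine (Submodule.span_singleton_le_iff_mem _ _).2 ?_ flip
  rw [path_mul_path, Finsupp.linearCombination_apply]
  refine Submodule.sum_mem _ fun D hD => Submodule.smul_mem _ _ (Submodule.subset_span ⟨D, ?_, rfl⟩)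
  have hPQ : (v :: D).Perm (v :: (P.reverse ++ Q)) :=
    (perm_of_mem_support_signedShuffle _ _ hD).cons v
  exact (hPQ.trans (((List.reverse_perm P).append_right Q).cons v)).trans List.perm_middle.symm

lemma eOS_mul_path_cons_of_mem {i j : Fin (n + 1)} {B : List (Fin (n + 1))} (hj : j ∈ B) :
    eOS n i j * path (i :: B) = 0 := by
  induction B generalizing i with
  | nil => simp at hj
  | cons a B ih =>
    rw [path_cons_cons, ← mul_assoc]
    rcases List.mem_cons.1 hj with rfl | hjB
    · simp
    · rw [eOS_mul_eOS, eOS_comm j a, sub_mul, mul_assoc, mul_assoc, ih hjB]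
      simp

lemma eOS_mul_path_of_mem {i j : Fin (n + 1)} {L : List (Fin (n + 1))} (hi : i ∈ L) (hj : j ∈ L) :
    eOS n i j * path L = 0 := by
  rcases eq_or_ne i j with rfl | hij
  · simp
  suffices rootedSpan i L ≤ LinearMap.ker (LinearMap.mulLeft ℚ (eOS n i j)) from
    this (path_mem_rootedSpan hi)
  refine Submodule.span_le.2 ?_
  rintro _ ⟨B, hB, rfl⟩
  have hjB : j ∈ B := ((List.mem_cons.1 (hB.mem_iff.2 hj)).resolve_left hij.symm)
  exact eOS_mul_path_cons_of_mem hjB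

/-- Expanding `e_{vb} e_{ba} · path (v :: C) = - path (a :: b :: v :: C)` by shuffles gives
`s • c = -c`, where `s` is a sum of shuffle signs, and `s ≥ 0`. -/
theorem eq_zero_of_forall_path_eq {M : Type*} [AddCommGroup M] [Module ℚ M] (f : OS n →ₗ[ℚ] M)
    {L : List (Fin (n + 1))} (hL : 3 ≤ L.length) {c : M}
    (hf : ∀ D : List (Fin (n + 1)), D.Perm L → f (path D) = c) : c = 0 := by
  obtain ⟨a, b, v, C, rfl⟩ : ∃ a b v C, L = a :: b :: v :: C := by
    match L, hL with
    | a :: b :: v :: C, _ => exact ⟨a, b, v, C, rfl⟩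
  have product : path [v, b, a] * path (v :: C) = -path (a :: b :: v :: C) := by
    simp only [path_cons_cons, path_singleton, mul_one]
    rw [eOS_mul_eOS_swap v b, eOS_comm b a, eOS_comm v b, neg_mul, mul_assoc]
  have expansion : f (path [v, b, a] * path (v :: C)) = shuffleSignSum [b, a] C • c := by
    rw [path_mul_path, Finsupp.apply_linearCombination, shuffleSignSum,
      Finsupp.linearCombination_apply, Finsupp.linearCombination_apply, Finsupp.sum, Finsupp.sum,
      Finset.sum_smul]
    refine Finset.sum_congr rfl fun D hD => ?_
    have hD' : (v :: D).Perm (v :: ([b, a] ++ C)) :=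
      (perm_of_mem_support_signedShuffle _ _ hD).cons v
    have hperm : (v :: ([b, a] ++ C)).Perm (a :: b :: v :: C) := by
      simpa using (List.reverse_perm [a, b, v]).append_right C
    simp [hf _ (hD'.trans hperm)]
  have total : (shuffleSignSum [b, a] C + 1) • c = 0 := by
    rw [add_smul, one_smul, ← expansion, product, map_neg, hf _ (List.Perm.refl _),
      neg_add_cancel]
  exact (smul_eq_zero.1 total).resolve_left
    (by linarith [shuffleSignSum_pair_nonneg b a C] : (0 : ℚ) < _).ne'

end ShuffleProduct

section Forest

/-- The monomial of a linear forest given by the list of its path components. -/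
def forest (LL : List (List (Fin (n + 1)))) : OS n := (LL.map path).prod

@[simp] lemma forest_nil : forest ([] : List (List (Fin (n + 1)))) = 1 := rfl

@[simp]
lemma forest_cons (L : List (Fin (n + 1))) (LL : List (List (Fin (n + 1)))) :
    forest (L :: LL) = path L * forest LL := by simp [forest]

lemma OSperm_forest (σ : Equiv.Perm (Fin (n + 1))) (LL : List (List (Fin (n + 1)))) :
    OSperm n σ (forest LL) = forest (LL.map (List.map σ)) := by
  simp [forest, map_list_prod, Function.comp_def, OSperm_path]

lemma forest_mem_span_of_perm {LL LL' : List (List (Fin (n + 1)))} (h : LL.Perm LL') :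
    forest LL ∈ ℚ ∙ forest LL' := by
  induction h with
  | nil => exact Submodule.mem_span_singleton_self _
  | cons L _ ih =>
    simpa using mul_mem_span_singleton (Submodule.mem_span_singleton_self (path L)) ih
  | swap L L' LL =>
    simpa [mul_assoc] using mul_mem_span_singleton (path_mul_path_mem_span_swap L' L)
      (Submodule.mem_span_singleton_self (forest LL))
  | trans _ _ ih₁ ih₂ => exact Submodule.mem_span_singleton_trans ih₁ ih₂

lemma eOS_mul_path_mul_path_mem_span (i j : Fin (n + 1)) (B C : List (Fin (n + 1))) :
    eOS n i j * (path (i :: B) * path (j :: C)) ∈ ℚ ∙ path ((i :: B).reverse ++ j :: C) := by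
  have split : path ((i :: B).reverse ++ j :: C) =
      path (i :: B).reverse * (eOS n i j * path (j :: C)) := by
    simpa using path_append_cons B.reverse i (j :: C)
  rw [split, ← mul_assoc (eOS n i j) (path (i :: B)), eOS_mul_path i B, smul_mul_assoc, mul_assoc]
  refine Submodule.smul_mem _ _ (mul_mem_span_singleton ?_ (Submodule.mem_span_singleton_self _))
  simpa using path_reverse_mem_span (i :: B).reverse

/-- The span of the monomials of the linear forests on the full vertex set. -/
def forestSpan (n : ℕ) : Submodule ℚ (OS n) :=
  Submodule.span ℚ {x | ∃ LL : List (List (Fin (n + 1))),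
    LL.flatten.Perm (List.finRange (n + 1)) ∧ forest LL = x}

lemma one_mem_forestSpan : (1 : OS n) ∈ forestSpan n := by
  refine Submodule.subset_span ⟨(List.finRange (n + 1)).map fun v => [v], ?_, ?_⟩
  · simp [← List.flatMap_def]
  · simp [forest, Function.comp_def]

lemma eOS_mul_rootedSpan_mem_forestSpan {i j : Fin (n + 1)} {L L' : List (Fin (n + 1))}
    {LL : List (List (Fin (n + 1)))}
    (h : (L :: L' :: LL).flatten.Perm (List.finRange (n + 1))) {x y : OS n}
    (hx : x ∈ rootedSpan i L) (hy : y ∈ rootedSpan j L') :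
    eOS n i j * (x * y) * forest LL ∈ forestSpan n := by
  suffices rootedSpan i L * rootedSpan j L' ≤ (forestSpan n).comap
      (LinearMap.mulRight ℚ (forest LL) ∘ₗ LinearMap.mulLeft ℚ (eOS n i j)) from
    this (Submodule.mul_mem_mul hx hy)
  rw [rootedSpan, rootedSpan, Submodule.span_mul_span, Submodule.span_le]
  rintro _ ⟨_, ⟨B, hB, rfl⟩, _, ⟨C, hC, rfl⟩, rfl⟩
  have join : eOS n i j * (path (i :: B) * path (j :: C)) * forest LL ∈
      ℚ ∙ forest (((i :: B).reverse ++ j :: C) :: LL) := by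
    simpa only [forest_cons] using mul_mem_span_singleton
      (eOS_mul_path_mul_path_mem_span i j B C) (Submodule.mem_span_singleton_self (forest LL))
  have hperm : ((i :: B).reverse ++ j :: C).Perm (L ++ L') :=
    ((List.reverse_perm _).trans hB).append hC
  have joined_perm : ((((i :: B).reverse ++ j :: C) :: LL).flatten).Perm
      (List.finRange (n + 1)) := by
    rw [List.flatten_cons]
    exact (hperm.append_right LL.flatten).trans (by simpa using h)
  have joined_mem : forest (((i :: B).reverse ++ j :: C) :: LL) ∈ forestSpan n :=
    Submodule.subset_span ⟨_, joined_perm, rfl⟩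
  exact (Submodule.span_singleton_le_iff_mem _ _).2 joined_mem join

lemma eOS_mul_mem_forestSpan (i j : Fin (n + 1)) {x : OS n} (hx : x ∈ forestSpan n) :
    eOS n i j * x ∈ forestSpan n := by
  suffices forestSpan n ≤ (forestSpan n).comap (LinearMap.mulLeft ℚ (eOS n i j)) from this hx
  refine Submodule.span_le.2 ?_
  rintro _ ⟨LL, hLL, rfl⟩
  obtain ⟨L, LL₁, hiL, hL⟩ :=
    exists_perm_cons_of_mem_flatten (hLL.mem_iff.2 (List.mem_finRange i))
  have hLL₁ : (L :: LL₁).flatten.Perm (List.finRange (n + 1)) := hL.symm.flatten.trans hLL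
  refine (Submodule.span_singleton_le_iff_mem _ _).2 ?_ (forest_mem_span_of_perm hL)
  by_cases hjL : j ∈ L
  · simp [← mul_assoc, eOS_mul_path_of_mem hiL hjL]
  have hj : j ∈ LL₁.flatten :=
    (List.mem_append.1 (hLL₁.mem_iff.2 (List.mem_finRange j))).resolve_left hjL
  obtain ⟨L', LL₂, hjL', hL'⟩ := exists_perm_cons_of_mem_flatten hj
  refine (Submodule.span_singleton_le_iff_mem _ _).2 ?_ (forest_mem_span_of_perm (hL'.cons L))
  have key := eOS_mul_rootedSpan_mem_forestSpan ((hL'.cons L).symm.flatten.trans hLL₁)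
    (path_mem_rootedSpan hiL) (path_mem_rootedSpan hjL')
  simpa [mul_assoc] using key

theorem span_forest_cons_eq_top (r : Fin (n + 1)) :
    Submodule.span ℚ {x : OS n | ∃ B LL, ((r :: B) :: LL).flatten.Perm (List.finRange (n + 1)) ∧
      forest ((r :: B) :: LL) = x} = ⊤ := by
  have forestSpan_eq_top : forestSpan n = ⊤ :=
    eq_top_iff.2 fun x _ => mem_of_one_mem_of_eOS_mul_mem one_mem_forestSpan
      (fun i j _ => eOS_mul_mem_forestSpan i j) x
  rw [← top_le_iff, ← forestSpan_eq_top, forestSpan, Submodule.span_le]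
  rintro _ ⟨LL, hLL, rfl⟩
  obtain ⟨L, LL₁, hrL, hL⟩ :=
    exists_perm_cons_of_mem_flatten (hLL.mem_iff.2 (List.mem_finRange r))
  refine (Submodule.span_singleton_le_iff_mem _ _).2 ?_ (forest_mem_span_of_perm hL)
  suffices rootedSpan r L ≤ (Submodule.span ℚ _).comap (LinearMap.mulRight ℚ (forest LL₁)) by
    simpa using this (path_mem_rootedSpan hrL)
  refine Submodule.span_le.2 ?_
  rintro _ ⟨B, hB, rfl⟩
  refine Submodule.subset_span ⟨B, LL₁, ?_, forest_cons _ _⟩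
  exact (hB.append_right LL₁.flatten).trans (hL.symm.flatten.trans hLL)

end Forest

section Invariants

lemma sym_forest_eq {B B' : List (Fin (n + 1))} {LL LL' : List (List (Fin (n + 1)))}
    (h : ((Fin.last n :: B) :: LL).flatten.Nodup)
    (h' : ((Fin.last n :: B') :: LL').flatten.Nodup)
    (hlen : ((Fin.last n :: B) :: LL).map List.length =
      ((Fin.last n :: B') :: LL').map List.length) :
    sym n (forest ((Fin.last n :: B) :: LL)) = sym n (forest ((Fin.last n :: B') :: LL')) := by
  obtain ⟨σ, hσ⟩ := exists_perm_map_eq h h' (by simp only [List.length_flatten, hlen])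
  have map_eq : ((Fin.last n :: B) :: LL).map (List.map σ) = (Fin.last n :: B') :: LL' := by
    rw [List.eq_iff_flatten_eq, ← List.map_flatten, hσ, ← hlen]
    simp [Function.comp_def]
  have hroot : σ (Fin.last n) = Fin.last n := by
    simp only [List.map_cons, List.cons.injEq] at map_eq
    exact map_eq.1.1
  rw [← map_eq, ← OSperm_forest, sym_OSperm hroot]

lemma sym_forest_eq_zero_of_three_le_length {B C : List (Fin (n + 1))}
    {LL : List (List (Fin (n + 1)))} (h : ((Fin.last n :: B) :: C :: LL).flatten.Nodup)
    (hC : 3 ≤ C.length) : sym n (forest ((Fin.last n :: B) :: C :: LL)) = 0 := by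
  refine eq_zero_of_forall_path_eq (sym n ∘ₗ LinearMap.mulLeft ℚ (path (Fin.last n :: B)) ∘ₗ
    LinearMap.mulRight ℚ (forest LL)) hC fun D hD => ?_
  have hperm : ((Fin.last n :: B) :: D :: LL).flatten.Perm
      ((Fin.last n :: B) :: C :: LL).flatten :=
    (hD.append_right LL.flatten).append_left (Fin.last n :: B)
  simpa using sym_forest_eq (hperm.nodup_iff.2 h) h (by simp [hD.length_eq])

lemma sym_forest_eq_zero_of_two_edges {a b c d : Fin (n + 1)} {B : List (Fin (n + 1))}
    {LL : List (List (Fin (n + 1)))}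
    (h : ((Fin.last n :: B) :: [a, b] :: [c, d] :: LL).flatten.Nodup) :
    sym n (forest ((Fin.last n :: B) :: [a, b] :: [c, d] :: LL)) = 0 := by
  have hperm : ((Fin.last n :: B) :: [c, d] :: [a, b] :: LL).Perm
      ((Fin.last n :: B) :: [a, b] :: [c, d] :: LL) := (List.Perm.swap _ _ _).cons _
  have anticomm : forest ((Fin.last n :: B) :: [c, d] :: [a, b] :: LL) =
      -forest ((Fin.last n :: B) :: [a, b] :: [c, d] :: LL) := by
    simp [← mul_assoc _ _ (forest LL), eOS_mul_eOS_swap c d a b]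
  have swap := sym_forest_eq (hperm.flatten.nodup_iff.2 h) h (by simp)
  rw [anticomm, map_neg] at swap
  have := IsAddTorsionFree.of_module_rat (OS n)
  exact self_eq_neg.1 swap.symm

lemma forest_filter_two_le_length (LL : List (List (Fin (n + 1)))) :
    forest (LL.filter fun L => 2 ≤ L.length) = forest LL := by
  induction LL with
  | nil => rfl
  | cons L LL ih =>
    match L with
    | [] | [_] => simpa using ih
    | a :: b :: L => simp [ih]

/-- The points other than the root `n + 1`, in decreasing order. -/
def nonroots (n : ℕ) : List (Fin (n + 1)) := ((List.finRange n).map Fin.castSucc).reverse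

@[simp] lemma length_nonroots : (nonroots n).length = n := by simp [nonroots]

lemma mem_nonroots {v : Fin (n + 1)} : v ∈ nonroots n ↔ v < Fin.last n := by
  simp [nonroots, Fin.exists_castSucc_eq, Fin.lt_last_iff_ne_last]

lemma pairwise_gt_nonroots : (nonroots n).Pairwise (· > ·) := by
  rw [nonroots, List.pairwise_reverse]
  exact (List.pairwise_lt_finRange n).map _ fun _ _ h => Fin.castSucc_lt_castSucc_iff.2 h

lemma nodup_nonroots : (nonroots n).Nodup := pairwise_gt_nonroots.imp fun h => h.ne'

/-- The path on `k + 1` vertices starting at the root, with the standard labels. -/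
def rootPath (n k : ℕ) : List (Fin (n + 1)) := Fin.last n :: (nonroots n).take k

/-- The edge on the next two standard labels after those of `rootPath n k`. -/
def nextEdge (n k : ℕ) : List (Fin (n + 1)) := ((nonroots n).drop k).take 2

/-- The symmetrized root paths with `k ≤ n` edges and the symmetrized forests made of a root path
with `k ≤ n - 2` edges and one further edge; they form a basis of the invariants. -/
def invariantFamily (n : ℕ) : Fin (n + 1) ⊕ Fin (n - 1) → OS n :=
  Sum.elim (fun k => sym n (forest [rootPath n k]))
    (fun k => sym n (forest [rootPath n k, nextEdge n k]))

lemma nodup_rootPath_append_nextEdge (k : ℕ) : (rootPath n k ++ nextEdge n k).Nodup := by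
  have hsub : (rootPath n k ++ nextEdge n k).Sublist (Fin.last n :: nonroots n) := by
    rw [rootPath, nextEdge, List.cons_append, List.cons_sublist_cons]
    conv_rhs => rw [← List.take_append_drop k (nonroots n)]
    exact (List.take_sublist _ _).append_left _
  refine List.Nodup.sublist hsub (List.nodup_cons.2 ⟨fun h => ?_, ?_⟩)
  · exact (mem_nonroots.1 h).false
  · exact nodup_nonroots

lemma nodup_flatten_rootPath (k : ℕ) : [rootPath n k].flatten.Nodup := by
  simpa using (List.nodup_append.1 (nodup_rootPath_append_nextEdge k)).1

lemma nodup_flatten_rootPath_nextEdge (k : ℕ) : [rootPath n k, nextEdge n k].flatten.Nodup := by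
  simpa using nodup_rootPath_append_nextEdge k

lemma sym_forest_root_mem_span {B : List (Fin (n + 1))} (hB : (Fin.last n :: B).Nodup) :
    sym n (forest [Fin.last n :: B]) ∈ Submodule.span ℚ (Set.range (invariantFamily n)) := by
  have hlen : B.length < n + 1 := by simpa using hB.length_le_card
  refine Submodule.subset_span ⟨.inl ⟨B.length, hlen⟩, ?_⟩
  exact sym_forest_eq (nodup_flatten_rootPath _) (by simpa using hB)
    (by simp [Nat.lt_succ_iff.1 hlen])

lemma sym_forest_root_edge_mem_span {B : List (Fin (n + 1))} {a b : Fin (n + 1)}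
    (h : [Fin.last n :: B, [a, b]].flatten.Nodup) :
    sym n (forest [Fin.last n :: B, [a, b]]) ∈
      Submodule.span ℚ (Set.range (invariantFamily n)) := by
  have hlen : B.length < n - 1 := by
    have hcard : (B.length + 1) + 2 ≤ n + 1 := by simpa using h.length_le_card
    omega
  refine Submodule.subset_span ⟨.inr ⟨B.length, hlen⟩, ?_⟩
  refine sym_forest_eq (nodup_flatten_rootPath_nextEdge _) h ?_
  simp only [nextEdge, List.map_cons, List.map_nil, List.length_cons, List.length_take,
    List.length_drop, length_nonroots, List.length_nil, List.cons.injEq, and_true]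
  omega

lemma sym_forest_cons_mem_span {B : List (Fin (n + 1))} {LL : List (List (Fin (n + 1)))}
    (h : ((Fin.last n :: B) :: LL).flatten.Nodup) (hLL : ∀ L ∈ LL, 2 ≤ L.length) :
    sym n (forest ((Fin.last n :: B) :: LL)) ∈
      Submodule.span ℚ (Set.range (invariantFamily n)) := by
  by_cases hlong : ∃ C ∈ LL, 3 ≤ C.length
  · classical
    obtain ⟨C, hC, hC3⟩ := hlong
    have hperm := (List.perm_cons_erase hC).cons (Fin.last n :: B)
    obtain ⟨c, hc⟩ := Submodule.mem_span_singleton.1 (forest_mem_span_of_perm hperm)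
    rw [← hc, map_smul, sym_forest_eq_zero_of_three_le_length (hperm.flatten.nodup_iff.1 h) hC3,
      smul_zero]
    exact Submodule.zero_mem _
  · have edges : ∀ L ∈ LL, ∃ a b, L = [a, b] := fun L hL => by
      have : ¬3 ≤ L.length := fun h3 => hlong ⟨L, hL, h3⟩
      exact List.length_eq_two.1 (by have := hLL L hL; omega)
    match LL with
    | [] => exact sym_forest_root_mem_span (by simpa using h)
    | [L] =>
      obtain ⟨a, b, rfl⟩ := edges L (by simp)
      exact sym_forest_root_edge_mem_span h
    | L :: L' :: LL =>
      obtain ⟨a, b, rfl⟩ := edges L (by simp)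
      obtain ⟨c, d, rfl⟩ := edges L' (by simp)
      rw [sym_forest_eq_zero_of_two_edges h]
      exact Submodule.zero_mem _

theorem span_invariantFamily :
    Submodule.span ℚ (Set.range (invariantFamily n)) = Subalgebra.toSubmodule (OSinv n) := by
  rw [← range_sym]
  apply le_antisymm
  · rw [Submodule.span_le]
    rintro _ ⟨k | k, rfl⟩ <;> exact LinearMap.mem_range_self _ _
  · rw [LinearMap.range_eq_map, ← span_forest_cons_eq_top (Fin.last n), Submodule.map_span_le]
    rintro _ ⟨B, LL, hLL, rfl⟩
    have hsub : ((Fin.last n :: B) :: LL.filter fun L => 2 ≤ L.length).flatten.Sublist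
        ((Fin.last n :: B) :: LL).flatten := (List.filter_sublist.cons_cons _).flatten
    rw [forest_cons, ← forest_filter_two_le_length LL, ← forest_cons]
    exact sym_forest_cons_mem_span ((hLL.nodup_iff.2 (List.nodup_finRange _)).sublist hsub)
      fun L hL => by simpa using (List.mem_filter.1 hL).2

end Invariants

section Detection

/-- The homomorphism to the exterior algebra on `n + 1` generators `f_v` sending `e_{ij}` to
`f_{min i j}`, on the ambient exterior algebra. -/
def minHomAmb (n : ℕ) : OSamb n →ₐ[ℚ] ExteriorAlgebra ℚ (Fin (n + 1) →₀ ℚ) :=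
  ExteriorAlgebra.map (Finsupp.lmapDomain ℚ ℚ fun s : OSidx n => s.1.inf)

lemma minHomAmb_eAmb {i j : Fin (n + 1)} (h : i ≠ j) :
    minHomAmb n (eAmb n i j h) = wedge ℚ Finsupp.basisSingleOne [min i j] := by
  simp [minHomAmb, eAmb, wedge]

/-- The homomorphism from `OS_n` to the exterior algebra on `n + 1` generators `f_v` sending
`e_{ij}` to `f_{min i j}`. -/
def minHom (n : ℕ) : OS n →ₐ[ℚ] ExteriorAlgebra ℚ (Fin (n + 1) →₀ ℚ) :=
  RingQuot.liftAlgHom ℚ ⟨minHomAmb n, by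
    rintro _ _ ⟨i, j, k, hij, hjk, hik⟩
    simpa [minHomAmb_eAmb, wedge] using
      wedge_min_relation (R := ℚ) (Finsupp.basisSingleOne (ι := Fin (n + 1))) i j k⟩

lemma minHom_eOS {i j : Fin (n + 1)} (h : i ≠ j) :
    minHom n (eOS n i j) = wedge ℚ Finsupp.basisSingleOne [min i j] := by
  rw [eOS_of_ne h, minHom, RingQuot.liftAlgHom_mkAlgHom_apply, minHomAmb_eAmb]

lemma minHom_path {L : List (Fin (n + 1))} (hL : L.Nodup) :
    minHom n (path L) = wedge ℚ Finsupp.basisSingleOne (consecutiveMin L) := by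
  induction L with
  | nil => simp [wedge]
  | cons a L ih =>
    cases L with
    | nil => simp [wedge]
    | cons b L =>
      have hab : a ≠ b := by
        rintro rfl
        simp at hL
      rw [path_cons_cons, map_mul, minHom_eOS hab, ih hL.of_cons]
      simp [wedge]

/-- The minima of the edges of a linear forest. -/
def edgeMins (LL : List (List (Fin (n + 1)))) : List (Fin (n + 1)) := LL.flatMap consecutiveMin

lemma minHom_forest {LL : List (List (Fin (n + 1)))} (hLL : LL.flatten.Nodup) :
    minHom n (forest LL) = wedge ℚ Finsupp.basisSingleOne (edgeMins LL) := by
  induction LL with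
  | nil => simp [wedge, edgeMins]
  | cons L LL ih =>
    obtain ⟨hL, hLL', -⟩ := List.nodup_append.1 hLL
    rw [forest_cons, map_mul, minHom_path hL, ih hLL']
    simp [wedge, edgeMins]

/-- The coefficient of the monomial with set of factors `K` in the image under `minHom n`. -/
def minCoeff (n : ℕ) (K : List (Fin (n + 1))) : OS n →ₗ[ℚ] ℚ :=
  Finsupp.basisSingleOne.ExteriorAlgebra.coord K.toFinset ∘ₗ (minHom n).toLinearMap

lemma minCoeff_forest {LL : List (List (Fin (n + 1)))} (hLL : LL.flatten.Nodup)
    (K : List (Fin (n + 1))) :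
    minCoeff n K (forest LL) = Finsupp.basisSingleOne.ExteriorAlgebra.coord K.toFinset
      (wedge ℚ Finsupp.basisSingleOne (edgeMins LL)) := by
  rw [minCoeff, LinearMap.comp_apply, AlgHom.toLinearMap_apply, minHom_forest hLL]

lemma minCoeff_forest_ne_zero_iff {LL : List (List (Fin (n + 1)))} (hLL : LL.flatten.Nodup)
    {K : List (Fin (n + 1))} (hK : K.Nodup) :
    minCoeff n K (forest LL) ≠ 0 ↔ (edgeMins LL).Perm K := by
  rw [minCoeff_forest hLL, coord_wedge_ne_zero_iff]
  refine ⟨fun ⟨h, hset⟩ => List.perm_of_nodup_nodup_toFinset_eq h hK hset, fun h => ?_⟩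
  exact ⟨h.nodup_iff.2 hK, List.toFinset_eq_of_perm _ _ h⟩

lemma minCoeff_sym_forest (K : List (Fin (n + 1))) (LL : List (List (Fin (n + 1)))) :
    minCoeff n K (sym n (forest LL)) =
      ∑ σ : rootStabilizer n, minCoeff n K (forest (LL.map (List.map σ))) := by
  simp only [sym_apply, map_sum, OSperm_forest]

lemma minCoeff_sym_forest_eq_zero {LL : List (List (Fin (n + 1)))} (hLL : LL.flatten.Nodup)
    {K : List (Fin (n + 1))} (hK : K.Nodup)
    (h : ∀ σ : rootStabilizer n, ¬(edgeMins (LL.map (List.map σ))).Perm K) :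
    minCoeff n K (sym n (forest LL)) = 0 := by
  rw [minCoeff_sym_forest]
  refine Finset.sum_eq_zero fun σ _ => ?_
  by_contra hne
  exact h σ ((minCoeff_forest_ne_zero_iff (nodup_flatten_map_map σ.1.injective hLL) hK).1 hne)

lemma minCoeff_sym_forest_ne_zero {LL : List (List (Fin (n + 1)))} (hLL : LL.flatten.Nodup)
    (hK : (edgeMins LL).Nodup)
    (h : ∀ σ : rootStabilizer n, (edgeMins (LL.map (List.map σ))).Perm (edgeMins LL) →
      edgeMins (LL.map (List.map σ)) = edgeMins LL) :
    minCoeff n (edgeMins LL) (sym n (forest LL)) ≠ 0 := by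
  rw [minCoeff_sym_forest]
  refine sum_ne_zero_of_forall_eq_zero_or_eq (c := minCoeff n (edgeMins LL) (forest LL)) (i := 1)
    (fun σ => or_iff_not_imp_left.2 fun hσ => ?_) ?_
  · have hLLσ := nodup_flatten_map_map σ.1.injective hLL
    rw [minCoeff_forest hLLσ, minCoeff_forest hLL,
      h σ ((minCoeff_forest_ne_zero_iff hLLσ hK).1 hσ)]
  · simpa using (minCoeff_forest_ne_zero_iff hLL hK).2 (List.Perm.refl _)

end Detection

section Independence

lemma edgeMins_singleton (L : List (Fin (n + 1))) : edgeMins [L] = consecutiveMin L := by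
  simp [edgeMins]

lemma edgeMins_cons_edge (L : List (Fin (n + 1))) (a b : Fin (n + 1)) :
    edgeMins [L, [a, b]] = consecutiveMin L ++ [min a b] := by
  simp [edgeMins]

lemma isChain_last_cons {T : List (Fin (n + 1))} (hT : (Fin.last n :: T).Nodup)
    (h : (consecutiveMin (Fin.last n :: T)).Nodup) : (Fin.last n :: T).IsChain (· > ·) := by
  cases T with
  | nil => exact .singleton _
  | cons a T =>
    refine isChain_of_nodup_consecutiveMin (Fin.lt_last_iff_ne_last.2 ?_) hT.of_cons h
    rintro rfl
    simp at hT

lemma eq_take_nonroots_of_perm {k : ℕ} {T : List (Fin (n + 1))}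
    (hT : (Fin.last n :: T).IsChain (· > ·)) (h : T.Perm ((nonroots n).take k)) :
    T = (nonroots n).take k :=
  h.eq_of_pairwise (fun _ _ _ _ hab hba => (hab.asymm hba).elim)
    (List.isChain_iff_pairwise.1 hT).of_cons (pairwise_gt_nonroots.sublist (List.take_sublist _ _))

lemma mem_take_nonroots_of_lt {k : ℕ} {u v : Fin (n + 1)} (hv : v ∈ (nonroots n).take k)
    (hvu : v < u) (hu : u < Fin.last n) : u ∈ (nonroots n).take k := by
  have hmem := mem_nonroots.2 hu
  have sorted := pairwise_gt_nonroots (n := n)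
  rw [← List.take_append_drop k (nonroots n)] at hmem sorted
  refine (List.mem_append.1 hmem).resolve_right fun hdrop => ?_
  exact hvu.asymm ((List.pairwise_append.1 sorted).2.2 v hv u hdrop)

lemma edgeMins_root_eq_of_perm {k : ℕ} {T : List (Fin (n + 1))} (hT : (Fin.last n :: T).Nodup)
    (h : (edgeMins [Fin.last n :: T]).Perm ((nonroots n).take k)) :
    edgeMins [Fin.last n :: T] = (nonroots n).take k := by
  rw [edgeMins_singleton] at h ⊢
  have hK : ((nonroots n).take k).Nodup := nodup_nonroots.sublist (List.take_sublist _ _)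
  have chain := isChain_last_cons hT (h.nodup_iff.2 hK)
  rw [consecutiveMin_cons_of_isChain chain] at h ⊢
  exact eq_take_nonroots_of_perm chain h

lemma edgeMins_root_edge_of_nodup {T : List (Fin (n + 1))} {a b : Fin (n + 1)}
    (h : [Fin.last n :: T, [a, b]].flatten.Nodup)
    (hmins : (edgeMins [Fin.last n :: T, [a, b]]).Nodup) :
    (Fin.last n :: T).IsChain (· > ·) ∧
      edgeMins [Fin.last n :: T, [a, b]] = T ++ [min a b] := by
  rw [edgeMins_cons_edge] at hmins ⊢
  have chain := isChain_last_cons (List.nodup_append.1 h).1 (List.nodup_append.1 hmins).1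
  exact ⟨chain, by rw [consecutiveMin_cons_of_isChain chain]⟩

/-- Otherwise the larger end of the extra edge would also be among the minima, since the minima
are closed upwards, hence would lie on the root path. -/
lemma min_notMem_take_nonroots {k : ℕ} {K T : List (Fin (n + 1))} {a b : Fin (n + 1)}
    (h : [Fin.last n :: T, [a, b]].flatten.Nodup)
    (hK : (T ++ [min a b]).Perm K) (hsub : (nonroots n).take k ⊆ K) :
    min a b ∉ (nonroots n).take k := by
  intro hmin
  obtain ⟨hab, notMem⟩ : a ≠ b ∧ max a b ∉ Fin.last n :: T := by grind
  have max_lt : max a b < Fin.last n :=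
    Fin.lt_last_iff_ne_last.2 (List.ne_of_not_mem_cons notMem)
  have mem : max a b ∈ T ++ [min a b] :=
    hK.mem_iff.2 (hsub (mem_take_nonroots_of_lt hmin (min_lt_max.2 hab) max_lt))
  rcases List.mem_append.1 mem with hT | heq
  · exact notMem (List.mem_cons_of_mem _ hT)
  · exact (min_lt_max.2 hab).ne' (List.mem_singleton.1 heq)

lemma not_perm_edgeMins_root_edge {k : ℕ} {T : List (Fin (n + 1))} {a b : Fin (n + 1)}
    (h : [Fin.last n :: T, [a, b]].flatten.Nodup) :
    ¬(edgeMins [Fin.last n :: T, [a, b]]).Perm ((nonroots n).take k) := by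
  intro hperm
  have hK : ((nonroots n).take k).Nodup := nodup_nonroots.sublist (List.take_sublist _ _)
  rw [(edgeMins_root_edge_of_nodup h (hperm.nodup_iff.2 hK)).2] at hperm
  exact min_notMem_take_nonroots h hperm (List.Subset.refl _) (hperm.mem_iff.1 (by simp))

lemma edgeMins_root_edge_eq_of_perm {k : ℕ} {T : List (Fin (n + 1))} {a b z : Fin (n + 1)}
    (h : [Fin.last n :: T, [a, b]].flatten.Nodup) (hK : ((nonroots n).take k ++ [z]).Nodup)
    (hperm : (edgeMins [Fin.last n :: T, [a, b]]).Perm ((nonroots n).take k ++ [z])) :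
    edgeMins [Fin.last n :: T, [a, b]] = (nonroots n).take k ++ [z] := by
  obtain ⟨chain, mins_eq⟩ := edgeMins_root_edge_of_nodup h (hperm.nodup_iff.2 hK)
  rw [mins_eq] at hperm ⊢
  have hmin : min a b = z := by
    have notMem := min_notMem_take_nonroots h hperm (List.subset_append_left _ _)
    have mem : min a b ∈ (nonroots n).take k ++ [z] := hperm.mem_iff.1 (by simp)
    simpa using (List.mem_append.1 mem).resolve_left notMem
  subst hmin
  rw [eq_take_nonroots_of_perm chain ((List.perm_append_right_iff _).1 hperm)]

lemma nextEdge_eq {k : ℕ} (hk : k < n - 1) : ∃ y z, nextEdge n k = [y, z] :=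
  List.length_eq_two.1 (by simp [nextEdge]; omega)

lemma edgeMins_rootPath (k : ℕ) : edgeMins [rootPath n k] = (nonroots n).take k := by
  have hroot : (rootPath n k).Pairwise (· > ·) :=
    List.pairwise_cons.2 ⟨fun v hv => mem_nonroots.1 (List.mem_of_mem_take hv),
      pairwise_gt_nonroots.sublist (List.take_sublist _ _)⟩
  rw [rootPath, edgeMins_singleton, consecutiveMin_cons_of_isChain hroot.isChain]

lemma edgeMins_rootPath_nextEdge {k : ℕ} (hk : k < n - 1) :
    ∃ z ∈ nextEdge n k, edgeMins [rootPath n k, nextEdge n k] = (nonroots n).take k ++ [z] := by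
  obtain ⟨y, z, hyz⟩ := nextEdge_eq hk
  refine ⟨min y z, by rcases min_choice y z with h | h <;> simp [hyz, h], ?_⟩
  rw [hyz, edgeMins_cons_edge, ← edgeMins_rootPath, edgeMins_singleton]

lemma map_rootPath (σ : rootStabilizer n) (k : ℕ) :
    (rootPath n k).map σ = Fin.last n :: ((nonroots n).take k).map σ := by
  rw [rootPath, List.map_cons]
  exact congrArg (· :: _) σ.2

lemma nodup_edgeMins_rootPath (k : ℕ) : (edgeMins [rootPath n k]).Nodup := by
  rw [edgeMins_rootPath]
  exact nodup_nonroots.sublist (List.take_sublist _ _)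

lemma nodup_edgeMins_rootPath_nextEdge {k : ℕ} (hk : k < n - 1) :
    (edgeMins [rootPath n k, nextEdge n k]).Nodup := by
  obtain ⟨z, hz, hmins⟩ := edgeMins_rootPath_nextEdge hk
  have hsub : ((nonroots n).take k ++ [z]).Sublist (rootPath n k ++ nextEdge n k) :=
    (List.sublist_cons_self _ _).append (List.singleton_sublist.2 hz)
  rw [hmins]
  exact (nodup_rootPath_append_nextEdge k).sublist hsub

lemma length_edgeMins_map (σ : Equiv.Perm (Fin (n + 1))) (LL : List (List (Fin (n + 1)))) :
    (edgeMins (LL.map (List.map σ))).length = (edgeMins LL).length := by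
  simp [edgeMins, List.length_flatMap, Function.comp_def]

lemma minCoeff_sym_forest_eq_zero_of_length_ne {LL LL' : List (List (Fin (n + 1)))}
    (hLL : LL.flatten.Nodup) (hLL' : (edgeMins LL').Nodup)
    (h : (edgeMins LL).length ≠ (edgeMins LL').length) :
    minCoeff n (edgeMins LL') (sym n (forest LL)) = 0 :=
  minCoeff_sym_forest_eq_zero hLL hLL' fun σ hperm =>
    h ((length_edgeMins_map σ LL).symm.trans hperm.length_eq)

lemma minCoeff_sym_rootPath_ne_zero (k : ℕ) :
    minCoeff n (edgeMins [rootPath n k]) (sym n (forest [rootPath n k])) ≠ 0 := by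
  refine minCoeff_sym_forest_ne_zero (nodup_flatten_rootPath k) (nodup_edgeMins_rootPath k)
    fun σ hperm => ?_
  have hnodup := nodup_flatten_map_map σ.1.injective (nodup_flatten_rootPath k)
  simp only [List.map_cons, List.map_nil, map_rootPath, edgeMins_rootPath] at hperm hnodup ⊢
  exact edgeMins_root_eq_of_perm (by simpa using hnodup) hperm

lemma minCoeff_sym_rootPath_nextEdge_ne_zero {k : ℕ} (hk : k < n - 1) :
    minCoeff n (edgeMins [rootPath n k, nextEdge n k])
      (sym n (forest [rootPath n k, nextEdge n k])) ≠ 0 := by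
  have hnodup_mins := nodup_edgeMins_rootPath_nextEdge hk
  refine minCoeff_sym_forest_ne_zero (nodup_flatten_rootPath_nextEdge k) hnodup_mins
    fun σ hperm => ?_
  have hnodup := nodup_flatten_map_map σ.1.injective (nodup_flatten_rootPath_nextEdge k)
  obtain ⟨z, -, hmins⟩ := edgeMins_rootPath_nextEdge hk
  obtain ⟨x, y, hxy⟩ := nextEdge_eq hk
  rw [hmins] at hperm hnodup_mins ⊢
  simp only [hxy, List.map_cons, List.map_nil, map_rootPath] at hperm hnodup ⊢
  exact edgeMins_root_edge_eq_of_perm hnodup hnodup_mins hperm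

lemma minCoeff_rootPath_sym_rootPath_nextEdge {k l : ℕ} (hl : l < n - 1) :
    minCoeff n (edgeMins [rootPath n k]) (sym n (forest [rootPath n l, nextEdge n l])) = 0 := by
  refine minCoeff_sym_forest_eq_zero (nodup_flatten_rootPath_nextEdge l)
    (nodup_edgeMins_rootPath k) fun σ hperm => ?_
  have hnodup := nodup_flatten_map_map σ.1.injective (nodup_flatten_rootPath_nextEdge l)
  obtain ⟨x, y, hxy⟩ := nextEdge_eq hl
  simp only [hxy, List.map_cons, List.map_nil, map_rootPath, edgeMins_rootPath] at hperm hnodup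
  exact not_perm_edgeMins_root_edge hnodup hperm

theorem linearIndependent_invariantFamily : LinearIndependent ℚ (invariantFamily n) := by
  refine linearIndependent_sumElim_of_dual
    (φ := fun k => minCoeff n (edgeMins [rootPath n k]))
    (ψ := fun k => minCoeff n (edgeMins [rootPath n k, nextEdge n k]))
    (fun k l => ⟨?_, fun hkl => ?_⟩) (fun k l => ⟨?_, fun hkl => ?_⟩)
    fun k l => minCoeff_rootPath_sym_rootPath_nextEdge l.2
  · rintro h rfl
    exact minCoeff_sym_rootPath_ne_zero _ h
  · refine minCoeff_sym_forest_eq_zero_of_length_ne (nodup_flatten_rootPath _)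
      (nodup_edgeMins_rootPath _) ?_
    simp only [edgeMins_rootPath, List.length_take, length_nonroots]
    omega
  · rintro h rfl
    exact minCoeff_sym_rootPath_nextEdge_ne_zero k.2 h
  · refine minCoeff_sym_forest_eq_zero_of_length_ne (nodup_flatten_rootPath_nextEdge _)
      (nodup_edgeMins_rootPath_nextEdge k.2) ?_
    obtain ⟨_, -, hk⟩ := edgeMins_rootPath_nextEdge k.2
    obtain ⟨_, -, hl⟩ := edgeMins_rootPath_nextEdge l.2
    simp only [hk, hl, List.length_append, List.length_take, List.length_singleton, length_nonroots]
    omega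

end Independence

end OrlikSolomon

/-- For every integer `n ≥ 2`, the `ℚ`-vector space `OS_n^{S_n}` has
dimension `2n`. -/
theorem finrank_OSinv (n : ℕ) (hn : 2 ≤ n) : Module.finrank ℚ (OSinv n) = 2 * n := by
  calc Module.finrank ℚ (OSinv n)
      = Module.finrank ℚ (Submodule.span ℚ (Set.range (OrlikSolomon.invariantFamily n))) :=
        congrArg (fun V : Submodule ℚ (OS n) => Module.finrank ℚ V)
          OrlikSolomon.span_invariantFamily.symm
    _ = Fintype.card (Fin (n + 1) ⊕ Fin (n - 1)) :=
        finrank_span_eq_card OrlikSolomon.linearIndependent_invariantFamily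
    _ = 2 * n := by
        rw [Fintype.card_sum, Fintype.card_fin, Fintype.card_fin]
        omega

end
end

section
/- For every integer n ≥ 2, the graded pieces of the invariant subalgebra satisfy: dim_ℚ (OS_n^{S_n})_0 = 1, dim_ℚ (OS_n^{S_n})_d = 2 for every d with 1 ≤ d ≤ n−1, dim_ℚ (OS_n^{S_n})_n = 1, and (OS_n^{S_n})_d = 0 for every d > n; equivalently, the Hilbert–Poincaré polynomial of OS_n^{S_n} equals (1 + t)(1 + t + t^2 + ⋯ + t^{n−1}). -/
noncomputable section

/-! Averaging identifies the invariants with the coinvariants, so it suffices to bound the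
coinvariants of `S_n` from above and to separate the symmetrizations of the spanning elements.

*Upper bound.* The relations rewrite a product of two edges at a vertex `v` as a combination of
products of one edge at `v` and one edge away from `v`, so monomials with at most one edge at `v`
suffice. Any two edges on a vertex set `S` are interchanged by a permutation of `S` and
anticommute, so their product is zero in the coinvariants of the permutations of `S`. By induction
on `S` the same holds in all degrees `≥ 2`: in the top degree, the derivation sending all edges
to `1` exhibits an element as a multiple of (sum of the edges) times an element of lower degree;
below it, peeling off vertices leaves a path on a proper subset of `S`, times at most one edge
disjoint from it. Applied to the complement of the vertex `n + 1`, the peeling shows that the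
degree `d` coinvariants of `S_n` are spanned by a path of `d` edges from `n + 1`, and a path of
`d - 1` edges from `n + 1` together with a disjoint edge.

*Lower bound.* Number the vertices downwards from `n + 1`. A homomorphism to an exterior algebra
sending an edge to the generator numbered by its larger end kills every path from `n + 1` along
which the numbers do not increase. Truncated suitably, it takes the same nonzero value on all
translates of one of the spanning elements that it does not kill, hence does not vanish on the
symmetrization of that element.
-/

namespace OS

variable {n : ℕ}

/-! ### Generators -/

theorem eOS_self (i : Fin (n + 1)) : eOS n i i = 0 := by simp [eOS]

theorem eOS_comm (i j : Fin (n + 1)) : eOS n i j = eOS n j i := by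
  unfold eOS eAmb
  simp only [Sym2.eq_swap (a := i) (b := j), eq_comm (a := i) (b := j)]

theorem exists_eOS_eq_mkAlgHom_ι (i j : Fin (n + 1)) :
    ∃ v, eOS n i j = RingQuot.mkAlgHom ℚ (OSRel n) (ExteriorAlgebra.ι ℚ v) := by
  by_cases h : i = j
  · exact ⟨0, by simp [h, eOS_self]⟩
  · exact ⟨_, by simp only [eOS, h, dite_false]; rfl⟩

theorem eOS_mul_eOS_comm (i j k l : Fin (n + 1)) :
    eOS n i j * eOS n k l = -(eOS n k l * eOS n i j) := by
  obtain ⟨v, hv⟩ := exists_eOS_eq_mkAlgHom_ι i j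
  obtain ⟨w, hw⟩ := exists_eOS_eq_mkAlgHom_ι k l
  have h := congr(RingQuot.mkAlgHom ℚ (OSRel n) $(ExteriorAlgebra.ι_add_mul_swap v w))
  rw [map_add, map_mul, map_mul, map_zero] at h
  rw [hv, hw, eq_neg_of_add_eq_zero_left h]

theorem eOS_mul_self (i j : Fin (n + 1)) : eOS n i j * eOS n i j = 0 := by
  obtain ⟨v, hv⟩ := exists_eOS_eq_mkAlgHom_ι i j
  rw [hv, ← map_mul, ExteriorAlgebra.ι_sq_zero, map_zero]

theorem eOS_mul_left_comm (i j k l : Fin (n + 1)) (x : OS n) :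
    eOS n i j * (eOS n k l * x) = -(eOS n k l * (eOS n i j * x)) := by
  rw [← mul_assoc, eOS_mul_eOS_comm, neg_mul, mul_assoc]

theorem eOS_triangle (i j k : Fin (n + 1)) :
    eOS n i k * eOS n j k - eOS n i j * eOS n j k + eOS n i j * eOS n i k = 0 := by
  by_cases hij : i = j
  · subst hij; simp [eOS_self, eOS_mul_self]
  by_cases hjk : j = k
  · subst hjk; simp [eOS_self, eOS_mul_self]
  by_cases hik : i = k
  · subst hik; simp [eOS_self, eOS_mul_self, eOS_comm j i]
  simpa [eOS, hij, hjk, hik] using RingQuot.mkAlgHom_rel ℚ (OSRel.rel i j k hij hjk hik)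

theorem eOS_mul_eOS_left (v a b : Fin (n + 1)) :
    eOS n v a * eOS n v b = eOS n v a * eOS n a b - eOS n v b * eOS n a b := by
  rw [← sub_eq_zero, ← eOS_triangle v a b]; abel

theorem OSperm_eOS (σ : Equiv.Perm (Fin (n + 1))) (i j : Fin (n + 1)) :
    OSperm n σ (eOS n i j) = eOS n (σ i) (σ j) := by
  by_cases h : i = j
  · simp [h, eOS_self]
  · have hσ : σ i ≠ σ j := σ.injective.ne h
    simp only [eOS, h, hσ, dite_false, OSperm]
    rw [RingQuot.liftAlgHom_mkAlgHom_apply, AlgHom.comp_apply, OSpermAmb_e]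

theorem induction {P : OS n → Prop} (one : P 1) (add : ∀ x y, P x → P y → P (x + y))
    (smul : ∀ (c : ℚ) x, P x → P (c • x)) (eOS_mul : ∀ i j, i ≠ j → ∀ x, P x → P (eOS n i j * x))
    (x : OS n) : P x := by
  suffices h : ∀ y, P y → P (x * y) by simpa using h 1 one
  obtain ⟨x, rfl⟩ := RingQuot.mkAlgHom_surjective ℚ (OSRel n) x
  induction x using ExteriorAlgebra.induction with
  | algebraMap r => intro y hy; simpa [← Algebra.smul_def] using smul r y hy
  | add a b ha hb => intro y hy; simpa [add_mul] using add _ _ (ha y hy) (hb y hy)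
  | mul a b ha hb => intro y hy; simpa [mul_assoc] using ha _ (hb y hy)
  | ι v =>
    intro y hy
    induction v using Finsupp.induction_linear with
    | zero => simpa using smul 0 y hy
    | add v w hv hw => simpa [add_mul] using add _ _ hv hw
    | single s c =>
      obtain ⟨s, hs⟩ := s
      induction s using Sym2.ind with
      | _ i j =>
        have hij : i ≠ j := fun h => hs (by simp [h])
        have h := smul c _ (eOS_mul i j hij y hy)
        rw [← smul_mul_assoc] at h
        simpa only [eOS, hij, dite_false, eAmb, ← map_smul, Finsupp.smul_single_one] using h

theorem algHom_ext {A : Type*} [Ring A] [Algebra ℚ A] {f g : OS n →ₐ[ℚ] A}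
    (h : ∀ i j, f (eOS n i j) = g (eOS n i j)) : f = g := by
  refine AlgHom.ext fun x => ?_
  induction x using OS.induction with
  | one => simp
  | add x y hx hy => simp [hx, hy]
  | smul c x hx => simp [hx]
  | eOS_mul i j _ x hx => simp [h, hx]

theorem eq_zero_of_add_self_eq_zero {M : Type*} [AddCommGroup M] [Module ℚ M] {x : M}
    (h : x + x = 0) : x = 0 :=
  (smul_eq_zero_iff_right (two_ne_zero (α := ℚ))).1 ((two_smul ℚ x).trans h)

section Lift

variable {A : Type*} [Ring A] [Algebra ℚ A] {g : Fin (n + 1) → Fin (n + 1) → A}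

/-- Families of elements of an algebra satisfying the defining relations of the generators
`eOS n i j`. Diagonal values enter only the anticommutation rule. -/
structure IsOSFamily (g : Fin (n + 1) → Fin (n + 1) → A) : Prop where
  symm : ∀ i j, g i j = g j i
  anticomm : ∀ i j k l, g i j * g k l + g k l * g i j = 0
  triangle : ∀ i j k, i ≠ j → j ≠ k → i ≠ k → g i k * g j k - g i j * g j k + g i j * g i k = 0

/-- The linear extension of a family indexed by pairs to the free module on the pairs. -/
def IsOSFamily.linearMap (hg : IsOSFamily g) : (OSidx n →₀ ℚ) →ₗ[ℚ] A :=
  Finsupp.linearCombination ℚ fun s : OSidx n => Sym2.lift ⟨g, hg.symm⟩ s.1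

theorem IsOSFamily.linearMap_mul_self (hg : IsOSFamily g) (v : OSidx n →₀ ℚ) :
    hg.linearMap v * hg.linearMap v = 0 := by
  suffices h : ∀ w, hg.linearMap v * hg.linearMap w + hg.linearMap w * hg.linearMap v = 0 from
    eq_zero_of_add_self_eq_zero (h v)
  intro w
  induction v using Finsupp.induction_linear with
  | zero => simp
  | add v v' h h' => simpa [add_mul, mul_add, add_add_add_comm] using congr($h + $h')
  | single s c =>
    induction w using Finsupp.induction_linear with
    | zero => simp
    | add w w' h h' => simpa [add_mul, mul_add, add_add_add_comm] using congr($h + $h')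
    | single t d =>
      obtain ⟨⟨i, j⟩, hs⟩ := s
      obtain ⟨⟨k, l⟩, ht⟩ := t
      have h : g k l * g i j = -(g i j * g k l) := eq_neg_of_add_eq_zero_right (hg.anticomm i j k l)
      simp [IsOSFamily.linearMap, smul_smul, mul_comm c d, h]

/-- The universal property of `OS n`. -/
def lift (hg : IsOSFamily g) : OS n →ₐ[ℚ] A :=
  RingQuot.liftAlgHom ℚ ⟨ExteriorAlgebra.lift ℚ ⟨hg.linearMap, hg.linearMap_mul_self⟩, by
    rintro _ _ ⟨i, j, k, hij, hjk, hik⟩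
    simpa [eAmb, IsOSFamily.linearMap] using hg.triangle i j k hij hjk hik⟩

theorem lift_eOS (hg : IsOSFamily g) {i j : Fin (n + 1)} (h : i ≠ j) :
    lift hg (eOS n i j) = g i j := by
  simp [lift, eOS, h, eAmb, IsOSFamily.linearMap]

end Lift

theorem OSperm_one : OSperm n 1 = AlgHom.id ℚ (OS n) := algHom_ext fun i j => by simp [OSperm_eOS]

/-- The action of the symmetric group on `OS n` by permutation of the indices. -/
def rep (n : ℕ) : Representation ℚ (Equiv.Perm (Fin (n + 1))) (OS n) where
  toFun σ := (OSperm n σ).toLinearMap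
  map_one' := congrArg AlgHom.toLinearMap OSperm_one
  map_mul' σ τ := congrArg AlgHom.toLinearMap
    (algHom_ext (g := (OSperm n σ).comp (OSperm n τ)) fun i j => by simp [OSperm_eOS])

/-! ### Spans of edges -/

/-- The span of the generators `eOS n a b` with both indices in `S`. -/
def edgeSpan (S : Finset (Fin (n + 1))) : Submodule ℚ (OS n) :=
  Submodule.span ℚ {x | ∃ a ∈ S, ∃ b ∈ S, eOS n a b = x}

variable {S T : Finset (Fin (n + 1))} {v : Fin (n + 1)} {d : ℕ} {N : Submodule ℚ (OS n)}

theorem eOS_mem_edgeSpan {a b : Fin (n + 1)} (ha : a ∈ S) (hb : b ∈ S) :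
    eOS n a b ∈ edgeSpan S := Submodule.subset_span ⟨a, ha, b, hb, rfl⟩

theorem eOS_mul_mem_edgeSpan_pow {a b : Fin (n + 1)} (ha : a ∈ S) (hb : b ∈ S) {x : OS n}
    (hx : x ∈ edgeSpan S ^ d) : eOS n a b * x ∈ edgeSpan S ^ (d + 1) := by
  rw [pow_succ']
  exact Submodule.mul_mem_mul (eOS_mem_edgeSpan ha hb) hx

theorem edgeSpan_pow_succ_le
    (h : ∀ a ∈ S, ∀ b ∈ S, a ≠ b → ∀ x ∈ edgeSpan S ^ d, eOS n a b * x ∈ N) :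
    edgeSpan S ^ (d + 1) ≤ N := by
  rw [pow_succ', Submodule.mul_le]
  intro y hy x hx
  suffices hS : edgeSpan S ≤ N.comap (LinearMap.mulRight ℚ x) from hS hy
  refine Submodule.span_le.2 ?_
  rintro _ ⟨a, ha, b, hb, rfl⟩
  by_cases hab : a = b
  · simp [hab, eOS_self]
  · exact h a ha b hb hab x hx

theorem OSdeg_eq_edgeSpan_pow (n d : ℕ) : OSdeg n d = edgeSpan Finset.univ ^ d := by
  rw [OSdeg, Submodule.map_pow]
  congr 1
  refine le_antisymm ?_ (Submodule.span_le.2 ?_)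
  · rw [LinearMap.range_eq_map, ← (Finsupp.basisSingleOne (R := ℚ)).span_eq, Submodule.map_span,
      Submodule.map_span, Submodule.span_le]
    rintro _ ⟨_, ⟨_, ⟨⟨⟨i, j⟩, hs⟩, rfl⟩, rfl⟩, rfl⟩
    have hij : i ≠ j := fun h => hs h
    have := eOS_mem_edgeSpan (Finset.mem_univ i) (Finset.mem_univ j)
    simpa [eOS, hij, eAmb] using this
  · rintro _ ⟨a, _, b, _, rfl⟩
    obtain ⟨v, hv⟩ := exists_eOS_eq_mkAlgHom_ι a b
    exact ⟨_, ⟨v, rfl⟩, hv.symm⟩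

/-- Two edges at `v` can be replaced by one edge at `v` and one away from `v`, so a degree
component is spanned by the monomials with at most one edge at `v`. -/
theorem edgeSpan_insert_pow_succ_le (hS : edgeSpan S ^ (d + 1) ≤ N)
    (hv : ∀ w ∈ S, ∀ x ∈ edgeSpan S ^ d, eOS n v w * x ∈ N) :
    edgeSpan (insert v S) ^ (d + 1) ≤ N := by
  have edge_mul {d : ℕ} {N : Submodule ℚ (OS n)} (hS : edgeSpan S ^ (d + 1) ≤ N)
      (hv : ∀ w ∈ S, ∀ x ∈ edgeSpan S ^ d, eOS n v w * x ∈ N) :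
      ∀ a ∈ insert v S, ∀ b ∈ insert v S, a ≠ b → ∀ x ∈ edgeSpan S ^ d, eOS n a b * x ∈ N := by
    intro a ha b hb hab x hx
    rcases Finset.mem_insert.1 ha with rfl | ha' <;> rcases Finset.mem_insert.1 hb with rfl | hb'
    · exact absurd rfl hab
    · exact hv b hb' x hx
    · rw [eOS_comm]; exact hv a ha' x hx
    · exact hS (eOS_mul_mem_edgeSpan_pow ha' hb' hx)
  induction d generalizing N with
  | zero => exact edgeSpan_pow_succ_le (by simpa only [pow_zero] using edge_mul hS hv)
  | succ d ih =>
    refine edgeSpan_pow_succ_le fun a ha b hb hab => ?_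
    suffices h : edgeSpan (insert v S) ^ (d + 1) ≤ N.comap (LinearMap.mulLeft ℚ (eOS n a b)) from
      fun x hx => h hx
    refine ih (fun x hx => edge_mul hS hv a ha b hb hab x hx) fun w hw x hx => ?_
    have hvw {c u : Fin (n + 1)} (hc : c ∈ S) (hu : u ∈ S) :
        eOS n v c * (eOS n v u * x) ∈ N := by
      rw [← mul_assoc, eOS_mul_eOS_left, sub_mul, mul_assoc, mul_assoc]
      exact sub_mem (hv c hc _ (eOS_mul_mem_edgeSpan_pow hc hu hx))
        (hv u hu _ (eOS_mul_mem_edgeSpan_pow hc hu hx))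
    rw [Submodule.mem_comap, LinearMap.mulLeft_apply]
    rcases Finset.mem_insert.1 ha with rfl | ha' <;> rcases Finset.mem_insert.1 hb with rfl | hb'
    · exact absurd rfl hab
    · exact hvw hb' hw
    · rw [eOS_comm]; exact hvw ha' hw
    · rw [eOS_mul_left_comm]
      exact neg_mem (hv w hw _ (eOS_mul_mem_edgeSpan_pow ha' hb' hx))

theorem edgeSpan_pow_succ_eq_bot (h : S.card ≤ d + 1) : edgeSpan S ^ (d + 1) = ⊥ := by
  induction S using Finset.induction_on generalizing d with
  | empty => simp [edgeSpan]
  | insert v S hv ih =>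
    rw [Finset.card_insert_of_notMem hv] at h
    rw [eq_bot_iff]
    refine edgeSpan_insert_pow_succ_le (ih (by omega)).le fun w hw x hx => ?_
    obtain ⟨d, rfl⟩ : ∃ k, d = k + 1 := ⟨d - 1, by have := Finset.card_pos.2 ⟨w, hw⟩; omega⟩
    rw [ih (by omega), Submodule.mem_bot] at hx
    simp [hx]

/-! ### The derivation -/

theorem isOSFamily_derivationMatrix : IsOSFamily fun i j : Fin (n + 1) =>
    !![-eOS n i j, 1; 0, eOS n i j] where
  symm i j := by rw [eOS_comm]
  anticomm i j k l := by
    have h := eOS_mul_eOS_comm i j k l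
    ext a b
    fin_cases a <;> fin_cases b <;> simp [h]
  triangle i j k _ _ _ := by
    have h := eOS_triangle i j k
    ext a b
    fin_cases a <;> fin_cases b <;> simp [h]

/-- The derivation of degree `-1` sending every generator to `1`. It is an entry of the
algebra homomorphism to the triangular matrices with diagonal `(± x, x)`. -/
def derivation (n : ℕ) : OS n →ₗ[ℚ] OS n :=
  Matrix.entryLinearMap ℚ (OS n) 0 1 ∘ₗ (lift isOSFamily_derivationMatrix).toLinearMap

theorem derivation_one : derivation n 1 = 0 := by simp [derivation]

theorem lift_derivationMatrix_one (x : OS n) :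
    lift isOSFamily_derivationMatrix x 1 0 = 0 ∧ lift isOSFamily_derivationMatrix x 1 1 = x := by
  induction x using OS.induction with
  | one => simp
  | add x y hx hy => simp [hx, hy]
  | smul c x hx => simp [hx]
  | eOS_mul i j hij x hx => simp [lift_eOS _ hij, Matrix.mul_apply, hx]

theorem derivation_eOS_mul {i j : Fin (n + 1)} (hij : i ≠ j) (x : OS n) :
    derivation n (eOS n i j * x) = x - eOS n i j * derivation n x := by
  obtain ⟨-, h⟩ := lift_derivationMatrix_one x
  simp only [derivation, LinearMap.comp_apply, AlgHom.toLinearMap_apply,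
    Matrix.entryLinearMap_apply, map_mul, lift_eOS _ hij, Matrix.mul_apply, Fin.sum_univ_two, h]
  simp [neg_add_eq_sub]

theorem edgeSpan_pow_succ_le_comap_derivation (S : Finset (Fin (n + 1))) (d : ℕ) :
    edgeSpan S ^ (d + 1) ≤ (edgeSpan S ^ d).comap (derivation n) := by
  induction d with
  | zero =>
    refine edgeSpan_pow_succ_le fun a _ b _ hab x hx => ?_
    obtain ⟨c, rfl⟩ := Submodule.mem_one.1 (pow_zero (edgeSpan S) ▸ hx)
    rw [Submodule.mem_comap, derivation_eOS_mul hab, Algebra.algebraMap_eq_smul_one, map_smul,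
      derivation_one, smul_zero, mul_zero, sub_zero, ← Algebra.algebraMap_eq_smul_one]
    exact hx
  | succ d ih =>
    refine edgeSpan_pow_succ_le fun a ha b hb hab x hx => ?_
    rw [Submodule.mem_comap, derivation_eOS_mul hab]
    exact sub_mem hx (eOS_mul_mem_edgeSpan_pow ha hb (ih hx))

/-! ### Coinvariants of the permutations of a set of indices -/

/-- The group of permutations moving only elements of `S`. -/
abbrev permOn (S : Finset (Fin (n + 1))) : Subgroup (Equiv.Perm (Fin (n + 1))) :=
  fixingSubgroup _ (S : Set (Fin (n + 1)))ᶜ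

/-- The action of `permOn S` on `OS n`. -/
abbrev repOn (S : Finset (Fin (n + 1))) : Representation ℚ (permOn S) (OS n) :=
  (rep n).comp (permOn S).subtype

/-- The kernel of the projection of `OS n` onto its coinvariants under `permOn S`. -/
abbrev coinvKer (S : Finset (Fin (n + 1))) : Submodule ℚ (OS n) :=
  Representation.Coinvariants.ker (repOn S)

theorem mem_permOn {σ : Equiv.Perm (Fin (n + 1))} : σ ∈ permOn S ↔ ∀ a ∉ S, σ a = a := by
  simp [mem_fixingSubgroup_iff]

theorem swap_mem_permOn {a b : Fin (n + 1)} (ha : a ∈ S) (hb : b ∈ S) :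
    Equiv.swap a b ∈ permOn S :=
  mem_permOn.2 fun _ hc => Equiv.swap_apply_of_ne_of_ne (ne_of_mem_of_not_mem ha hc).symm
    (ne_of_mem_of_not_mem hb hc).symm

theorem apply_mem_iff_of_mem_permOn {σ : Equiv.Perm (Fin (n + 1))} (hσ : σ ∈ permOn S)
    {a : Fin (n + 1)} : σ a ∈ S ↔ a ∈ S := by
  rw [mem_permOn] at hσ
  refine not_iff_not.1 ⟨fun h => ?_, fun h => by rwa [hσ a h]⟩
  rwa [← σ.injective (hσ _ h)]

theorem OSperm_sub_mem_coinvKer {σ : Equiv.Perm (Fin (n + 1))} (hσ : σ ∈ permOn S) (x : OS n) :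
    OSperm n σ x - x ∈ coinvKer S :=
  Representation.Coinvariants.sub_mem_ker (ρ := repOn S) ⟨σ, hσ⟩ x

theorem coinvKer_le (h : ∀ σ ∈ permOn S, ∀ x, OSperm n σ x - x ∈ N) : coinvKer S ≤ N := by
  refine Submodule.span_le.2 ?_
  rintro _ ⟨⟨σ, x⟩, rfl⟩
  exact h σ σ.2 x

theorem coinvKer_mono (h : S ⊆ T) : coinvKer S ≤ coinvKer T :=
  coinvKer_le fun _ hσ => OSperm_sub_mem_coinvKer
    (mem_permOn.2 fun a ha => mem_permOn.1 hσ a fun haS => ha (h haS))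

theorem mem_coinvKer_of_OSperm_eq_neg {σ : Equiv.Perm (Fin (n + 1))} (hσ : σ ∈ permOn S)
    {x : OS n} (hx : OSperm n σ x = -x) : x ∈ coinvKer S := by
  have h := OSperm_sub_mem_coinvKer hσ x
  rw [hx, show -x - x = (-2 : ℚ) • x by module] at h
  exact (Submodule.smul_mem_iff _ (by norm_num)).1 h

theorem mul_mem_coinvKer {x y : OS n} (hy : ∀ σ ∈ permOn S, OSperm n σ y = y)
    (hx : x ∈ coinvKer S) : y * x ∈ coinvKer S := by
  suffices h : coinvKer S ≤ (coinvKer S).comap (LinearMap.mulLeft ℚ y) from h hx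
  refine coinvKer_le fun σ hσ z => ?_
  simpa [mul_sub, hy σ hσ] using OSperm_sub_mem_coinvKer hσ (y * z)

theorem mul_mem_coinvKer_right {x y : OS n} (hy : ∀ σ ∈ permOn S, OSperm n σ y = y)
    (hx : x ∈ coinvKer S) : x * y ∈ coinvKer S := by
  suffices h : coinvKer S ≤ (coinvKer S).comap (LinearMap.mulRight ℚ y) from h hx
  refine coinvKer_le fun σ hσ z => ?_
  simpa [sub_mul, hy σ hσ] using OSperm_sub_mem_coinvKer hσ (z * y)

theorem OSperm_eOS_of_notMem {a b : Fin (n + 1)} (ha : a ∉ S) (hb : b ∉ S) :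
    ∀ σ ∈ permOn S, OSperm n σ (eOS n a b) = eOS n a b := fun σ hσ => by
  rw [OSperm_eOS, mem_permOn.1 hσ a ha, mem_permOn.1 hσ b hb]

theorem OSperm_sum_offDiag_eOS : ∀ σ ∈ permOn S,
    OSperm n σ (∑ p ∈ S.offDiag, eOS n p.1 p.2) = ∑ p ∈ S.offDiag, eOS n p.1 p.2 := by
  intro σ hσ
  simp only [map_sum, OSperm_eOS]
  refine Finset.sum_equiv (σ.prodCongr σ) (fun p => ?_) fun _ _ => rfl
  simp [apply_mem_iff_of_mem_permOn hσ]

theorem exists_mem_permOn_interchange_eOS {a b c d : Fin (n + 1)} (ha : a ∈ S) (hb : b ∈ S)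
    (hc : c ∈ S) (hd : d ∈ S) (hab : a ≠ b) (hcd : c ≠ d) :
    ∃ σ ∈ permOn S, OSperm n σ (eOS n a b) = eOS n c d ∧ OSperm n σ (eOS n c d) = eOS n a b := by
  simp only [OSperm_eOS]
  by_cases hac : a = c
  · exact ⟨_, swap_mem_permOn hb hd, by grind [eOS_comm]⟩
  by_cases had : a = d
  · exact ⟨_, swap_mem_permOn hb hc, by grind [eOS_comm]⟩
  by_cases hbc : b = c
  · exact ⟨_, swap_mem_permOn ha hd, by grind [eOS_comm]⟩
  · refine ⟨_, mul_mem (swap_mem_permOn ha hc) (swap_mem_permOn hb hd), ?_⟩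
    simp only [Equiv.Perm.mul_apply]
    grind

theorem edgeSpan_sq_le_coinvKer (S : Finset (Fin (n + 1))) : edgeSpan S ^ 2 ≤ coinvKer S := by
  rw [sq, edgeSpan, Submodule.span_mul_span, Submodule.span_le]
  rintro _ ⟨_, ⟨a, ha, b, hb, rfl⟩, _, ⟨c, hc, d, hd, rfl⟩, rfl⟩
  by_cases hab : a = b
  · simp [hab, eOS_self]
  by_cases hcd : c = d
  · simp [hcd, eOS_self]
  obtain ⟨σ, hσ, hab', hcd'⟩ := exists_mem_permOn_interchange_eOS ha hb hc hd hab hcd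
  refine mem_coinvKer_of_OSperm_eq_neg hσ ?_
  rw [map_mul, hab', hcd', eOS_mul_eOS_comm]

/-- Let `ω` be the sum of the edges on `S`. If `x` lies in the top degree then `ω * x = 0`, and
applying the derivation exhibits a multiple of `x` as `ω` times an element of lower degree. -/
theorem edgeSpan_pow_succ_le_coinvKer_of_eq_bot (hbot : edgeSpan S ^ (d + 2) = ⊥)
    (hd : edgeSpan S ^ d ≤ coinvKer S) : edgeSpan S ^ (d + 1) ≤ coinvKer S := by
  intro x hx
  rcases le_or_gt S.card 1 with hS | hS
  · rw [edgeSpan_pow_succ_eq_bot (by omega), Submodule.mem_bot] at hx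
    exact hx ▸ zero_mem _
  have edge_mul : ∀ p ∈ S.offDiag, eOS n p.1 p.2 * derivation n x = x := by
    intro p hp
    obtain ⟨ha, hb, hab⟩ := Finset.mem_offDiag.1 hp
    have h : eOS n p.1 p.2 * x ∈ edgeSpan S ^ (d + 2) := eOS_mul_mem_edgeSpan_pow ha hb hx
    rw [hbot, Submodule.mem_bot] at h
    rw [eq_comm, ← sub_eq_zero, ← derivation_eOS_mul hab, h, map_zero]
  have hsum : (S.offDiag.card : ℚ) • x = (∑ p ∈ S.offDiag, eOS n p.1 p.2) * derivation n x := by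
    rw [Finset.sum_mul, Finset.sum_congr rfl edge_mul, Finset.sum_const, Nat.cast_smul_eq_nsmul]
  have hcard : (S.offDiag.card : ℚ) ≠ 0 := by
    rw [Nat.cast_ne_zero, Finset.offDiag_card, Nat.sub_ne_zero_iff_lt]
    nlinarith
  rw [← Submodule.smul_mem_iff _ hcard, hsum]
  exact mul_mem_coinvKer OSperm_sum_offDiag_eOS
    (hd (edgeSpan_pow_succ_le_comap_derivation S d hx))

/-! ### Path monomials -/

/-- The product of the generators along the consecutive pairs of a list of indices. -/
def path (l : List (Fin (n + 1))) : OS n := (l.zipWith (eOS n) l.tail).prod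

theorem path_singleton (a : Fin (n + 1)) : path [a] = 1 := by simp [path]

theorem path_cons_cons (a b : Fin (n + 1)) (l : List (Fin (n + 1))) :
    path (a :: b :: l) = eOS n a b * path (b :: l) := by simp [path]

theorem OSperm_path (σ : Equiv.Perm (Fin (n + 1))) (l : List (Fin (n + 1))) :
    OSperm n σ (path l) = path (l.map σ) := by
  simp [path, map_list_prod, List.map_zipWith, List.zipWith_map, OSperm_eOS, ← List.map_tail]

theorem path_cons_mem_edgeSpan_pow {a : Fin (n + 1)} {l : List (Fin (n + 1))}
    (h : ∀ b ∈ a :: l, b ∈ S) : path (a :: l) ∈ edgeSpan S ^ l.length := by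
  induction l generalizing a with
  | nil => exact path_singleton a ▸ Submodule.one_le.1 (pow_zero (edgeSpan S)).ge
  | cons b l ih =>
    rw [List.forall_mem_cons] at h
    exact path_cons_cons a b l ▸ eOS_mul_mem_edgeSpan_pow h.1 (h.2 b List.mem_cons_self) (ih h.2)

/-- Modulo the coinvariant kernel, deleting a vertex leads to paths from that vertex, possibly
followed by a single disjoint edge: with two or more edges disjoint from the path built so far,
the monomial lies in the kernel. -/
theorem edgeSpan_insert_pow_le (hv : v ∉ S)
    (hker : ∀ T ⊆ S, ∀ k, 2 ≤ k → edgeSpan T ^ k ≤ coinvKer T) (hN : coinvKer S ≤ N)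
    (hpath : ∀ l : List (Fin (n + 1)), l.Nodup → (∀ a ∈ l, a ∈ S) → l.length = d →
      path (v :: l) ∈ N)
    (hbroken : ∀ (l : List (Fin (n + 1))) (a b : Fin (n + 1)), (l ++ [a, b]).Nodup →
      (∀ c ∈ l ++ [a, b], c ∈ S) → l.length + 1 = d → path (v :: l) * eOS n a b ∈ N) :
    edgeSpan (insert v S) ^ d ≤ N := by
  induction d generalizing S v N with
  | zero =>
    rw [pow_zero, Submodule.one_le]
    exact path_singleton v ▸ hpath [] List.nodup_nil (by simp) rfl
  | succ d ih =>
    refine edgeSpan_insert_pow_succ_le ?_ fun w hw x hx => ?_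
    · rcases Nat.eq_zero_or_pos d with rfl | hd
      · refine edgeSpan_pow_succ_le fun a ha b hb hab x hx => ?_
        obtain ⟨c, rfl⟩ := Submodule.mem_one.1 (pow_zero (edgeSpan S) ▸ hx)
        have h := hbroken [] a b (by simpa using hab) (by simp [ha, hb]) rfl
        simpa [path_singleton, Algebra.algebraMap_eq_smul_one] using N.smul_mem c h
      · exact (hker S subset_rfl _ (by omega)).trans hN
    · suffices h : edgeSpan (insert w (S.erase w)) ^ d ≤ N.comap (LinearMap.mulLeft ℚ (eOS n v w))
        from h ((Finset.insert_erase hw).symm ▸ hx)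
      have cons_mem {l : List (Fin (n + 1))} (hl : ∀ a ∈ l, a ∈ S.erase w) :
          w ∉ l ∧ ∀ a ∈ w :: l, a ∈ S :=
        ⟨fun h => Finset.notMem_erase w S (hl w h),
          List.forall_mem_cons.2 ⟨hw, fun a ha => Finset.mem_of_mem_erase (hl a ha)⟩⟩
      refine ih (Finset.notMem_erase w S) (fun T hT => hker T (hT.trans (S.erase_subset w))) ?_
        (fun l hl hlS hld => ?_) (fun l a b hl hlS hld => ?_)
      · refine fun y hy => hN (coinvKer_mono (S.erase_subset w) (mul_mem_coinvKer ?_ hy))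
        exact OSperm_eOS_of_notMem (fun h => hv (Finset.mem_of_mem_erase h)) (S.notMem_erase w)
      · have h := hpath (w :: l) (hl.cons (cons_mem hlS).1) (cons_mem hlS).2 (by simp [hld])
        rwa [path_cons_cons] at h
      · have h := hbroken (w :: l) a b (hl.cons (cons_mem hlS).1) (cons_mem hlS).2
          (by simpa using hld)
        rwa [path_cons_cons, mul_assoc] at h

theorem path_cons_mem_coinvKer_toFinset
    (hker : ∀ T ⊂ S, ∀ k, 2 ≤ k → edgeSpan T ^ k ≤ coinvKer T) {l : List (Fin (n + 1))}
    (hlS : (v :: l).toFinset ⊆ S) (hl : 2 ≤ l.length) (hlt : l.length + 1 < S.card) :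
    path (v :: l) ∈ coinvKer (v :: l).toFinset := by
  have hne : (v :: l).toFinset ≠ S := fun h =>
    ((v :: l).toFinset_card_le.trans_lt hlt).ne (congrArg _ h)
  exact hker _ (hlS.ssubset_of_ne hne) _ hl (path_cons_mem_edgeSpan_pow (by simp))

theorem edgeSpan_pow_le_coinvKer (S : Finset (Fin (n + 1))) (hd : 2 ≤ d) :
    edgeSpan S ^ d ≤ coinvKer S := by
  induction S using Finset.strongInduction generalizing d with
  | H S ihS =>
  induction d, hd using Nat.le_induction with
  | base => exact edgeSpan_sq_le_coinvKer S
  | succ d hd ihd =>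
    rcases le_or_gt S.card (d + 2) with hcard | hcard
    · exact edgeSpan_pow_succ_le_coinvKer_of_eq_bot (edgeSpan_pow_succ_eq_bot hcard) ihd
    obtain ⟨v, S, hv, rfl⟩ : ∃ v S', v ∉ S' ∧ insert v S' = S := by
      obtain ⟨v, hv⟩ := Finset.card_pos.1 (by omega : 0 < S.card)
      exact ⟨v, S.erase v, S.notMem_erase v, Finset.insert_erase hv⟩
    have toFinset_subset {l : List (Fin (n + 1))} (hl : ∀ a ∈ l, a ∈ S) :
        (v :: l).toFinset ⊆ insert v S := by
      rw [List.toFinset_cons]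
      exact Finset.insert_subset_insert v fun a ha => hl a (List.mem_toFinset.1 ha)
    refine edgeSpan_insert_pow_le hv
      (fun T hT k hk => ihS T (hT.trans_ssubset (Finset.ssubset_insert hv)) hk)
      (coinvKer_mono (Finset.subset_insert v S)) (fun l _ hlS hld => ?_)
      (fun l a b hl hlS hld => ?_)
    · have h := toFinset_subset hlS
      exact coinvKer_mono h
        (path_cons_mem_coinvKer_toFinset (fun T hT k => ihS T hT) h (by omega) (by omega))
    · have h := toFinset_subset (l := l) fun c hc => hlS c (by simp [hc])
      have hav : a ≠ v := ne_of_mem_of_not_mem (hlS a (by simp)) hv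
      have hbv : b ≠ v := ne_of_mem_of_not_mem (hlS b (by simp)) hv
      have hab : a ∉ (v :: l).toFinset ∧ b ∉ (v :: l).toFinset := by
        simp only [List.mem_toFinset, List.mem_cons]
        grind
      exact coinvKer_mono h (mul_mem_coinvKer_right (OSperm_eOS_of_notMem hab.1 hab.2)
        (path_cons_mem_coinvKer_toFinset (fun T hT k => ihS T hT) h (by omega) (by omega)))

/-! ### Upper bound -/

instance (S : Finset (Fin (n + 1))) : Fintype (permOn S) := Fintype.ofFinite _

/-- The sum of the translates of an element under the permutations of the indices fixing the
last one. -/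
def orbitSum (n : ℕ) : OS n →ₗ[ℚ] OS n :=
  Representation.norm (repOn (Finset.univ.erase (Fin.last n)))

theorem orbitSum_apply (x : OS n) :
    orbitSum n x = ∑ σ : permOn (Finset.univ.erase (Fin.last n)), OSperm n σ x := by
  rw [orbitSum, Representation.norm, LinearMap.sum_apply]
  rfl

theorem mem_permOn_erase_last {σ : Equiv.Perm (Fin (n + 1))} :
    σ ∈ permOn (Finset.univ.erase (Fin.last n)) ↔ σ (Fin.last n) = Fin.last n := by
  simp [mem_permOn]

theorem orbitSum_OSperm {σ : Equiv.Perm (Fin (n + 1))} (hσ : σ (Fin.last n) = Fin.last n)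
    (x : OS n) : orbitSum n (OSperm n σ x) = orbitSum n x :=
  Representation.norm_self_apply (ρ := repOn _) ⟨σ, mem_permOn_erase_last.2 hσ⟩ x

theorem OSperm_orbitSum {σ : Equiv.Perm (Fin (n + 1))} (hσ : σ (Fin.last n) = Fin.last n)
    (x : OS n) : OSperm n σ (orbitSum n x) = orbitSum n x :=
  Representation.self_norm_apply (ρ := repOn _) ⟨σ, mem_permOn_erase_last.2 hσ⟩ x

theorem coinvKer_le_ker_orbitSum :
    coinvKer (Finset.univ.erase (Fin.last n)) ≤ LinearMap.ker (orbitSum n) :=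
  coinvKer_le fun σ hσ x => by simp [orbitSum_OSperm (mem_permOn_erase_last.1 hσ)]

theorem edgeSpan_univ_pow_le_comap_OSperm (σ : Equiv.Perm (Fin (n + 1))) (d : ℕ) :
    edgeSpan Finset.univ ^ d ≤ (edgeSpan Finset.univ ^ d).comap (OSperm n σ).toLinearMap := by
  rw [← Submodule.map_le_iff_le_comap, Submodule.map_pow]
  refine pow_le_pow_left' ?_ d
  rw [edgeSpan, Submodule.map_span_le]
  rintro _ ⟨a, _, b, _, rfl⟩
  rw [AlgHom.toLinearMap_apply, OSperm_eOS]
  exact eOS_mem_edgeSpan (Finset.mem_univ _) (Finset.mem_univ _)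

theorem orbitSum_mem_OSinv (x : OS n) : orbitSum n x ∈ OSinv n := fun _ hσ => OSperm_orbitSum hσ x

theorem orbitSum_mem_OSinvDeg {x : OS n} (hx : x ∈ OSdeg n d) : orbitSum n x ∈ OSinvDeg n d := by
  refine Submodule.mem_inf.2 ⟨orbitSum_mem_OSinv x, ?_⟩
  rw [OSdeg_eq_edgeSpan_pow] at hx ⊢
  rw [orbitSum_apply]
  exact sum_mem fun σ _ => edgeSpan_univ_pow_le_comap_OSperm σ.1 d hx

theorem OSinvDeg_le_of_orbitSum_mem (h : ∀ x ∈ OSdeg n d, orbitSum n x ∈ N) :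
    OSinvDeg n d ≤ N := by
  rintro x ⟨hinv, hx⟩
  set G := permOn (Finset.univ.erase (Fin.last n))
  have hsum : orbitSum n x = (Fintype.card G : ℚ) • x := by
    rw [orbitSum_apply, Nat.cast_smul_eq_nsmul, ← Finset.card_univ]
    exact Finset.sum_eq_card_nsmul fun σ _ => hinv σ (mem_permOn_erase_last.1 σ.2)
  have hcard : (Fintype.card G : ℚ) ≠ 0 := Nat.cast_ne_zero.2 Fintype.card_ne_zero
  rw [← Submodule.smul_mem_iff N hcard, ← hsum]
  exact h x hx

theorem OSinvDeg_le (hpath : ∀ l : List (Fin (n + 1)), (Fin.last n :: l).Nodup → l.length = d →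
      orbitSum n (path (Fin.last n :: l)) ∈ N)
    (hbroken : ∀ (l : List (Fin (n + 1))) (a b : Fin (n + 1)),
      (Fin.last n :: (l ++ [a, b])).Nodup → l.length + 1 = d →
      orbitSum n (path (Fin.last n :: l) * eOS n a b) ∈ N) : OSinvDeg n d ≤ N := by
  refine OSinvDeg_le_of_orbitSum_mem fun x hx => ?_
  rw [OSdeg_eq_edgeSpan_pow, ← Finset.insert_erase (Finset.mem_univ (Fin.last n))] at hx
  have cons_nodup {l : List (Fin (n + 1))} (hl : l.Nodup)
      (hlS : ∀ a ∈ l, a ∈ Finset.univ.erase (Fin.last n)) : (Fin.last n :: l).Nodup :=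
    hl.cons fun h => Finset.notMem_erase _ _ (hlS _ h)
  refine edgeSpan_insert_pow_le (N := N.comap (orbitSum n)) (Finset.notMem_erase _ _)
    (fun T _ k => edgeSpan_pow_le_coinvKer T) (fun y hy => ?_)
    (fun l hl hlS => hpath l (cons_nodup hl hlS))
    (fun l a b hl hlS => hbroken l a b (cons_nodup hl hlS)) hx
  rw [Submodule.mem_comap, coinvKer_le_ker_orbitSum hy]
  exact zero_mem N

theorem OSinvDeg_eq_bot (h : n < d) : OSinvDeg n d = ⊥ := by
  obtain ⟨d, rfl⟩ : ∃ k, d = k + 1 := ⟨d - 1, by omega⟩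
  rw [OSinvDeg, OSdeg_eq_edgeSpan_pow, edgeSpan_pow_succ_eq_bot (by simpa using h), inf_bot_eq]

theorem exists_perm_map_eq {α : Type*} {l l' : List α} (hl : l.Nodup) (hl' : l'.Nodup)
    (h : l.length = l'.length) : ∃ σ : Equiv.Perm α, l.map σ = l' := by
  have := Equiv.Perm.isMultiplyPretransitive α l.length
  obtain ⟨σ, hσ⟩ := MulAction.exists_smul_eq (Equiv.Perm α)
    (⟨l.get, List.nodup_iff_injective_get.1 hl⟩ : Fin l.length ↪ α)
    ⟨fun i => l'.get (i.cast h), (List.nodup_iff_injective_get.1 hl').comp (Fin.cast_injective h)⟩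
  refine ⟨σ, List.ext_getElem (by simpa using h) fun i hi hi' => ?_⟩
  simpa using congr($hσ ⟨i, by simpa using hi⟩)

/-- The indices numbered from the last one downwards: `vertex n k` is `n - k` for `k ≤ n`. -/
def vertex (n k : ℕ) : Fin (n + 1) := Fin.rev (Fin.ofNat (n + 1) k)

theorem vertex_zero (n : ℕ) : vertex n 0 = Fin.last n := by
  rw [vertex, Fin.ofNat_zero, Fin.rev_zero]

theorem val_rev_vertex {k : ℕ} (h : k ≤ n) : ((vertex n k).rev : ℕ) = k := by
  rw [vertex, Fin.rev_rev, Fin.val_ofNat, Nat.mod_eq_of_lt (Nat.lt_succ_of_le h)]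

theorem vertex_injOn (n : ℕ) : Set.InjOn (vertex n) (Set.Iic n) := fun j hj k hk h => by
  rw [← val_rev_vertex hj, h, val_rev_vertex hk]

theorem vertex_ne_vertex_succ {k : ℕ} (h : k + 1 ≤ n) : vertex n k ≠ vertex n (k + 1) :=
  (vertex_injOn n).ne (Nat.le_of_succ_le h) h k.lt_succ_self.ne

theorem vertex_val_rev (a : Fin (n + 1)) : vertex n a.rev = a := by
  rw [vertex, Fin.ofNat_val_eq_self, Fin.rev_rev]

/-- The list of the vertices numbered `0, …, d`. -/
def vertices (n d : ℕ) : List (Fin (n + 1)) := (List.range' 0 (d + 1)).map (vertex n)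

theorem length_vertices (n d : ℕ) : (vertices n d).length = d + 1 := by simp [vertices]

theorem vertices_succ (n d : ℕ) : vertices n (d + 1) = vertices n d ++ [vertex n (d + 1)] := by
  rw [vertices, List.range'_1_concat, List.map_append, List.map_singleton, zero_add, vertices]

theorem vertices_eq_cons (n d : ℕ) :
    vertices n d = Fin.last n :: (List.range' 1 d).map (vertex n) := by
  rw [vertices, List.range'_succ, List.map_cons, vertex_zero]

theorem nodup_vertices (h : d ≤ n) : (vertices n d).Nodup := by
  refine List.Nodup.map_on (fun j hj k hk hjk => ?_) List.nodup_range'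
  rw [List.mem_range'_1] at hj hk
  exact vertex_injOn n (Set.mem_Iic.2 (by omega)) (Set.mem_Iic.2 (by omega)) hjk

theorem mem_vertices_iff (h : d ≤ n) {a : Fin (n + 1)} : a ∈ vertices n d ↔ (a.rev : ℕ) ≤ d := by
  simp only [vertices, List.mem_map, List.mem_range'_1]
  refine ⟨?_, fun ha => ⟨a.rev, by omega, vertex_val_rev a⟩⟩
  rintro ⟨k, hk, rfl⟩
  rw [val_rev_vertex (by omega)]
  omega

theorem exists_perm_map_cons_eq_vertices {l : List (Fin (n + 1))} (hl : (Fin.last n :: l).Nodup)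
    (hd : l.length = d) :
    ∃ σ : Equiv.Perm (Fin (n + 1)), σ (Fin.last n) = Fin.last n ∧
      (Fin.last n :: l).map σ = vertices n d := by
  have hdn : d ≤ n := by simpa [hd] using hl.length_le_card
  obtain ⟨σ, hσ⟩ := exists_perm_map_eq hl (nodup_vertices hdn) (by simp [length_vertices, hd])
  refine ⟨σ, ?_, hσ⟩
  rw [vertices_eq_cons, List.map_cons] at hσ
  exact List.head_eq_of_cons_eq hσ

theorem orbitSum_path {l : List (Fin (n + 1))} (hl : (Fin.last n :: l).Nodup)
    (hd : l.length = d) :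
    orbitSum n (path (Fin.last n :: l)) = orbitSum n (path (vertices n d)) := by
  obtain ⟨σ, hσ, hl⟩ := exists_perm_map_cons_eq_vertices hl hd
  rw [← orbitSum_OSperm hσ, OSperm_path, hl]

/-- The path along the first `d + 1` vertices, times the disjoint edge between the next two. -/
def brokenPath (n d : ℕ) : OS n :=
  path (vertices n d) * eOS n (vertex n (d + 1)) (vertex n (d + 2))

theorem orbitSum_path_mul_eOS {l : List (Fin (n + 1))} {a b : Fin (n + 1)}
    (hl : (Fin.last n :: (l ++ [a, b])).Nodup) (hd : l.length = d) :
    orbitSum n (path (Fin.last n :: l) * eOS n a b) = orbitSum n (brokenPath n d) := by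
  obtain ⟨σ, hσ, h⟩ := exists_perm_map_cons_eq_vertices (d := d + 2) hl (by simp [hd])
  rw [← List.cons_append, List.map_append, vertices_succ, vertices_succ, List.append_assoc] at h
  obtain ⟨hpath, hedge⟩ := List.append_inj h (by simp [length_vertices, hd])
  obtain ⟨ha, hb⟩ : σ a = vertex n (d + 1) ∧ σ b = vertex n (d + 2) := by simpa using hedge
  rw [← orbitSum_OSperm hσ, map_mul, OSperm_path, OSperm_eOS, hpath, ha, hb, brokenPath]

theorem path_vertices_mem_OSdeg (n d : ℕ) : path (vertices n d) ∈ OSdeg n d := by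
  rw [OSdeg_eq_edgeSpan_pow, vertices_eq_cons]
  simpa using path_cons_mem_edgeSpan_pow (S := Finset.univ) (a := Fin.last n)
    (l := (List.range' 1 d).map (vertex n)) (by simp)

theorem brokenPath_mem_OSdeg (n d : ℕ) : brokenPath n d ∈ OSdeg n (d + 1) := by
  have h := path_vertices_mem_OSdeg n d
  rw [OSdeg_eq_edgeSpan_pow] at h ⊢
  rw [brokenPath, pow_succ]
  exact Submodule.mul_mem_mul h (eOS_mem_edgeSpan (Finset.mem_univ _) (Finset.mem_univ _))

theorem OSinvDeg_eq_span_singleton (hd : d = 0 ∨ n ≤ d) :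
    OSinvDeg n d = ℚ ∙ orbitSum n (path (vertices n d)) := by
  refine le_antisymm (OSinvDeg_le (fun l hl hld => ?_) fun l a b hl hld => ?_) ?_
  · rw [orbitSum_path hl hld]
    exact Submodule.mem_span_singleton_self _
  · have h : l.length + 3 ≤ n + 1 := by simpa using hl.length_le_card
    omega
  · rw [Submodule.span_singleton_le_iff_mem]
    exact orbitSum_mem_OSinvDeg (path_vertices_mem_OSdeg n d)

theorem OSinvDeg_succ_eq_span_pair (n d : ℕ) : OSinvDeg n (d + 1) =
    Submodule.span ℚ {orbitSum n (path (vertices n (d + 1))), orbitSum n (brokenPath n d)} := by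
  refine le_antisymm (OSinvDeg_le (fun l hl hld => ?_) fun l a b hl hld => ?_) ?_
  · rw [orbitSum_path hl hld]
    exact Submodule.mem_span_of_mem (Set.mem_insert _ _)
  · rw [orbitSum_path_mul_eOS hl (Nat.succ_injective hld)]
    exact Submodule.mem_span_of_mem (Set.mem_insert_of_mem _ rfl)
  · rw [Submodule.span_le, Set.pair_subset_iff]
    exact ⟨orbitSum_mem_OSinvDeg (path_vertices_mem_OSdeg n (d + 1)),
      orbitSum_mem_OSinvDeg (brokenPath_mem_OSdeg n d)⟩

/-! ### Lower bound -/

theorem orbitSum_map_ne_zero {M : Type*} [AddCommGroup M] [Module ℚ M] (f : OS n →ₗ[ℚ] M)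
    {x : OS n} (hx : f x ≠ 0) (h : ∀ σ : Equiv.Perm (Fin (n + 1)), σ (Fin.last n) = Fin.last n →
      f (OSperm n σ x) ≠ 0 → f (OSperm n σ x) = f x) : f (orbitSum n x) ≠ 0 := by
  classical
  set G := permOn (Finset.univ.erase (Fin.last n))
  have hsum : f (orbitSum n x) = (Finset.card {σ : G | f (OSperm n σ x) ≠ 0} : ℚ) • f x := by
    rw [orbitSum_apply, map_sum, ← Finset.sum_filter_ne_zero, Nat.cast_smul_eq_nsmul]
    refine Finset.sum_eq_card_nsmul fun σ hσ => h σ (mem_permOn_erase_last.1 σ.2) ?_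
    exact (Finset.mem_filter.1 hσ).2
  rw [hsum]
  refine smul_ne_zero (Nat.cast_ne_zero.2 (Finset.card_ne_zero_of_mem (a := 1) ?_)) hx
  simpa [OSperm_one] using hx

theorem orbitSum_map_eq_zero {M : Type*} [AddCommGroup M] [Module ℚ M] (f : OS n →ₗ[ℚ] M)
    {x : OS n} (h : ∀ σ : Equiv.Perm (Fin (n + 1)), σ (Fin.last n) = Fin.last n →
      f (OSperm n σ x) = 0) : f (orbitSum n x) = 0 := by
  rw [orbitSum_apply, map_sum]
  exact Finset.sum_eq_zero fun σ _ => h σ (mem_permOn_erase_last.1 σ.2)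

theorem prod_ofFn_ι_ne_zero {K V : Type*} [Field K] [AddCommGroup V] [Module K V] {d : ℕ}
    {v : Fin d → V} (hv : LinearIndependent K v) :
    (List.ofFn fun i => ExteriorAlgebra.ι K (v i)).prod ≠ 0 := by
  have h := (exteriorPower.ιMulti_family_linearIndependent_field (n := d) hv).ne_zero
    (Set.powersetCard.ofFinEmbEquiv (RelEmbedding.refl (· ≤ ·)))
  rw [exteriorPower.ιMulti_family, Equiv.symm_apply_apply, Ne, ← Subtype.coe_inj] at h
  simpa [ExteriorAlgebra.ιMulti_apply] using h

/-- The generators of an exterior algebra, numbered by the natural numbers. -/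
def level (k : ℕ) : ExteriorAlgebra ℚ (ℕ →₀ ℚ) := ExteriorAlgebra.ι ℚ (Finsupp.single k 1)

theorem level_mul_self (k : ℕ) : level k * level k = 0 := ExteriorAlgebra.ι_sq_zero _

theorem level_mul_add_level_mul (k l : ℕ) : level k * level l + level l * level k = 0 :=
  ExteriorAlgebra.ι_add_mul_swap _ _

theorem prod_level_ne_zero (m d : ℕ) : ((List.range' m d).map level).prod ≠ 0 := by
  have hv : LinearIndependent ℚ fun i : Fin d => (Finsupp.single (m + i) 1 : ℕ →₀ ℚ) :=
    (Finsupp.basisSingleOne (R := ℚ) (ι := ℕ)).linearIndependent.comp (fun i : Fin d => m + i)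
      fun i j hij => Fin.ext (Nat.add_left_cancel hij)
  convert prod_ofFn_ι_ne_zero hv using 2
  exact List.ext_getElem (by simp) fun i _ _ => by simp [level]

theorem prod_level_succ (d : ℕ) : ((List.range' 1 (d + 1)).map level).prod =
    ((List.range' 1 d).map level).prod * level (d + 1) := by
  rw [List.range'_1_concat, List.map_append, List.prod_append, List.map_singleton,
    List.prod_singleton, add_comm 1 d]

/-- The images of the generators under `detector`, in terms of the numbers of the indices. -/
def detectorValue (r j k : ℕ) : ExteriorAlgebra ℚ (ℕ →₀ ℚ) :=
  if max j k ≤ r then level (max j k) else if r < min j k then level (r + 1) else 0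

theorem detectorValue_eq_level_right {r j k : ℕ} (hjk : j ≤ k) (hk : k ≤ r) :
    detectorValue r j k = level k := by
  simp [detectorValue, hjk, hk]

theorem detectorValue_eq_level_left {r j k : ℕ} (hkj : k ≤ j) (hj : j ≤ r) :
    detectorValue r j k = level j := by
  simp [detectorValue, hkj, hj]

theorem detectorValue_of_lt_of_lt {r j k : ℕ} (hj : r < j) (hk : r < k) :
    detectorValue r j k = level (r + 1) := by
  simp [detectorValue, hj, hk, hj.not_ge]

theorem detectorValue_of_le_of_lt {r j k : ℕ} (hj : j ≤ r) (hk : r < k) :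
    detectorValue r j k = 0 := by
  simp [detectorValue, hj.not_gt, hk.not_ge]

theorem detectorValue_comm (r j k : ℕ) : detectorValue r j k = detectorValue r k j := by
  simp [detectorValue, max_comm, min_comm]

theorem detectorValue_ultrametric (r j k l : ℕ) : detectorValue r j k = detectorValue r j l ∨
    detectorValue r j k = detectorValue r k l ∨ detectorValue r j l = detectorValue r k l := by
  unfold detectorValue
  grind

/-- The triangle relation is `(g i k - g i j) * (g j k - g i j) = 0`, up to the anticommutation
rule. -/
theorem IsOSFamily.of_ultrametric {A : Type*} [Ring A] [Algebra ℚ A]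
    {g : Fin (n + 1) → Fin (n + 1) → A} (symm : ∀ i j, g i j = g j i)
    (anticomm : ∀ i j k l, g i j * g k l + g k l * g i j = 0)
    (ultra : ∀ i j k, g i j = g i k ∨ g i j = g j k ∨ g i k = g j k) : IsOSFamily g where
  symm := symm
  anticomm := anticomm
  triangle i j k _ _ _ := by
    have mul_self (i j : Fin (n + 1)) : g i j * g i j = 0 :=
      eq_zero_of_add_self_eq_zero (anticomm i j i j)
    rcases ultra i j k with h | h | h
    · simp [h, mul_self]
    · simp [h, mul_self, anticomm]
    · simp [h, mul_self]

theorem isOSFamily_detectorValue (r : ℕ) :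
    IsOSFamily fun i j : Fin (n + 1) => detectorValue r i.rev j.rev :=
  .of_ultrametric (fun _ _ => detectorValue_comm r _ _)
    (fun i j k l => by
      unfold detectorValue
      split_ifs <;> simp [level_mul_add_level_mul])
    fun _ _ _ => detectorValue_ultrametric r _ _ _

/-- Number the indices by `vertex n`. The detector at `r` sends the generator of an edge among the
vertices up to `r` to the generator numbered by its larger end, that of an edge among the
vertices beyond `r` to the generator numbered `r + 1`, and the other ones to zero. -/
def detector (n r : ℕ) : OS n →ₐ[ℚ] ExteriorAlgebra ℚ (ℕ →₀ ℚ) :=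
  lift (isOSFamily_detectorValue r)

theorem detector_eOS (r : ℕ) {i j : Fin (n + 1)} (h : i ≠ j) :
    detector n r (eOS n i j) = detectorValue r i.rev j.rev := lift_eOS _ h

/-- A path on which the detector does not vanish climbs: after an edge from `a` up to `b`, the
factor `level b` kills every step down from `b`. -/
theorem length_le_and_eq_of_mul_detector_path_ne_zero {r : ℕ} {y : ExteriorAlgebra ℚ (ℕ →₀ ℚ)}
    {a : Fin (n + 1)} {l : List (Fin (n + 1))} (ha : (a.rev : ℕ) ≤ r)
    (hy : ∀ t : Fin (n + 1), t.rev < a.rev → y * detector n r (eOS n a t) = 0)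
    (h : y * detector n r (path (a :: l)) ≠ 0) :
    a.rev + l.length ≤ r ∧
      (a.rev + l.length = r → l.map (fun t => (t.rev : ℕ)) = List.range' (a.rev + 1) l.length) := by
  induction l generalizing y a with
  | nil => simpa using ha
  | cons b l ih =>
    rw [path_cons_cons, map_mul, ← mul_assoc] at h
    have hya : y * detector n r (eOS n a b) ≠ 0 := left_ne_zero_of_mul h
    have hab : a ≠ b := fun hab => hya (by rw [hab, eOS_self, map_zero, mul_zero])
    have hlt : a.rev < b.rev :=
      lt_of_le_of_ne (not_lt.1 fun hba => hya (hy b hba)) (Fin.rev_injective.ne hab)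
    have hb : (b.rev : ℕ) ≤ r := by
      refine not_lt.1 fun hb => right_ne_zero_of_mul hya ?_
      rw [detector_eOS r hab, detectorValue_of_le_of_lt ha hb]
    rw [detector_eOS r hab, detectorValue_eq_level_right hlt.le hb] at h
    obtain ⟨hle, heq⟩ := ih hb (fun t ht => by
      rw [detector_eOS r (fun hbt => ht.ne (congrArg Fin.rev hbt.symm)),
        detectorValue_eq_level_left (Fin.le_iff_val_le_val.1 ht.le) hb, mul_assoc, level_mul_self,
        mul_zero]) h
    rw [Fin.lt_def] at hlt
    rw [List.length_cons]
    refine ⟨by omega, fun hr => ?_⟩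
    have hba : (b.rev : ℕ) = a.rev + 1 := by omega
    rw [List.map_cons, heq (by omega), List.range'_succ, hba]

theorem length_le_and_eq_vertices_of_detector_path_ne_zero {r : ℕ} {l : List (Fin (n + 1))}
    (h : detector n r (path (Fin.last n :: l)) ≠ 0) :
    l.length ≤ r ∧ (l.length = r → Fin.last n :: l = vertices n r) := by
  have hlast : ((Fin.last n).rev : ℕ) = 0 := by simp
  have key := length_le_and_eq_of_mul_detector_path_ne_zero (y := 1) (hlast ▸ Nat.zero_le r)
    (fun t ht => absurd (Fin.lt_def.1 ht) (by omega)) (by rwa [one_mul])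
  rw [hlast, zero_add, zero_add] at key
  refine ⟨key.1, fun hr => ?_⟩
  have hl : l = (l.map fun t => (t.rev : ℕ)).map (vertex n) := by
    rw [List.map_map, show vertex n ∘ _ = id from funext vertex_val_rev, List.map_id]
  rw [vertices_eq_cons, hl, key.2 hr, hr]

theorem detector_path_map_vertex {r m d : ℕ} (hn : m + d ≤ n) (hr : m + d ≤ r) :
    detector n r (path ((List.range' m (d + 1)).map (vertex n))) =
      ((List.range' (m + 1) d).map level).prod := by
  induction d generalizing m with
  | zero => simp [path_singleton]
  | succ d ih =>
    have hne : vertex n m ≠ vertex n (m + 1) := vertex_ne_vertex_succ (by omega)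
    rw [List.range'_succ, List.range'_succ, List.map_cons, List.map_cons, path_cons_cons, map_mul,
      detector_eOS r hne, val_rev_vertex (by omega), val_rev_vertex (by omega),
      detectorValue_eq_level_right (by omega) (by omega), List.map_cons, List.prod_cons,
      ← ih (by omega) (by omega), List.range'_succ, List.map_cons]

theorem detector_path_vertices (h : d ≤ n) :
    detector n d (path (vertices n d)) = ((List.range' 1 d).map level).prod :=
  detector_path_map_vertex (by omega) (by omega)

theorem detector_brokenPath (h : d + 2 ≤ n) :
    detector n d (brokenPath n d) = ((List.range' 1 (d + 1)).map level).prod := by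
  rw [brokenPath, map_mul, detector_path_vertices (by omega),
    detector_eOS d (vertex_ne_vertex_succ h), val_rev_vertex (by omega), val_rev_vertex h,
    detectorValue_of_lt_of_lt (by omega) (by omega), prod_level_succ]

theorem OSperm_path_vertices {σ : Equiv.Perm (Fin (n + 1))} (hσ : σ (Fin.last n) = Fin.last n)
    (d : ℕ) : ∃ l : List (Fin (n + 1)), l.length = d ∧
      (vertices n d).map σ = Fin.last n :: l ∧
      OSperm n σ (path (vertices n d)) = path (Fin.last n :: l) := by
  refine ⟨((List.range' 1 d).map (vertex n)).map σ, by simp, ?_⟩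
  rw [OSperm_path, vertices_eq_cons, List.map_cons, hσ]
  exact ⟨rfl, rfl⟩

theorem detector_orbitSum_path_ne_zero (h : d ≤ n) :
    detector n d (orbitSum n (path (vertices n d))) ≠ 0 := by
  refine orbitSum_map_ne_zero (detector n d).toLinearMap ?_ fun σ hσ hne => ?_
  · rw [AlgHom.toLinearMap_apply, detector_path_vertices h]
    exact prod_level_ne_zero 1 d
  · obtain ⟨l, hl, -, hpath⟩ := OSperm_path_vertices hσ d
    rw [hpath] at hne ⊢
    rw [(length_le_and_eq_vertices_of_detector_path_ne_zero hne).2 hl]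

theorem orbitSum_path_ne_zero (h : d ≤ n) : orbitSum n (path (vertices n d)) ≠ 0 := fun h0 =>
  detector_orbitSum_path_ne_zero h (by rw [h0, map_zero])

theorem detector_orbitSum_path_succ_eq_zero (n d : ℕ) :
    detector n d (orbitSum n (path (vertices n (d + 1)))) = 0 := by
  refine orbitSum_map_eq_zero (detector n d).toLinearMap fun σ hσ => ?_
  obtain ⟨l, hl, -, hpath⟩ := OSperm_path_vertices hσ (d + 1)
  by_contra hne
  rw [hpath] at hne
  have := (length_le_and_eq_vertices_of_detector_path_ne_zero hne).1
  omega

theorem detector_orbitSum_brokenPath_ne_zero (h : d + 2 ≤ n) :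
    detector n d (orbitSum n (brokenPath n d)) ≠ 0 := by
  refine orbitSum_map_ne_zero (detector n d).toLinearMap ?_ fun σ hσ hne => ?_
  · rw [AlgHom.toLinearMap_apply, detector_brokenPath h]
    exact prod_level_ne_zero 1 (d + 1)
  · obtain ⟨l, hl, hmap, hpath⟩ := OSperm_path_vertices hσ d
    rw [brokenPath, map_mul, hpath, OSperm_eOS, AlgHom.toLinearMap_apply, map_mul] at hne
    have hvertices := (length_le_and_eq_vertices_of_detector_path_ne_zero
      (left_ne_zero_of_mul hne)).2 hl
    have lt_rev {k : ℕ} (hk : d < k) (hkn : k ≤ n) : d < ((σ (vertex n k)).rev : ℕ) := by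
      rw [← not_le, ← mem_vertices_iff (d := d) (by omega), ← hvertices, ← hmap,
        List.mem_map_of_injective σ.injective, mem_vertices_iff (by omega), val_rev_vertex hkn]
      exact hk.not_ge
    rw [AlgHom.toLinearMap_apply, AlgHom.toLinearMap_apply, detector_brokenPath h, brokenPath,
      map_mul, hpath, OSperm_eOS, map_mul, hvertices, detector_path_vertices (by omega),
      detector_eOS d (σ.injective.ne (vertex_ne_vertex_succ h)),
      detectorValue_of_lt_of_lt (lt_rev (by omega) (by omega)) (lt_rev (by omega) h),
      prod_level_succ]

theorem linearIndependent_orbitSum (h : d + 2 ≤ n) : LinearIndependent ℚ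
    ![orbitSum n (path (vertices n (d + 1))), orbitSum n (brokenPath n d)] := by
  refine (LinearIndependent.pair_iff' (orbitSum_path_ne_zero (by omega))).2 fun c hc =>
    detector_orbitSum_brokenPath_ne_zero h ?_
  rw [← hc, map_smul, detector_orbitSum_path_succ_eq_zero, smul_zero]

end OS

/-- For every integer `n ≥ 2`: the degree-`0` graded piece of `OS_n^{S_n}`
has dimension `1`, the degree-`d` pieces for `1 ≤ d ≤ n−1` have dimension `2`, the degree-`n`
piece has dimension `1`, and the pieces of degree `> n` vanish; i.e. the Hilbert–Poincaré
polynomial of `OS_n^{S_n}` is `(1+t)(1+t+⋯+t^{n−1})`. -/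
theorem OSinv_hilbert_series (n : ℕ) (hn : 2 ≤ n) :
    Module.finrank ℚ (OSinvDeg n 0) = 1 ∧
    (∀ d : ℕ, 1 ≤ d → d ≤ n - 1 → Module.finrank ℚ (OSinvDeg n d) = 2) ∧
    Module.finrank ℚ (OSinvDeg n n) = 1 ∧
    (∀ d : ℕ, n < d → OSinvDeg n d = ⊥) := by
  have finrank_eq_one {d : ℕ} (hd : d = 0 ∨ d = n) : Module.finrank ℚ (OSinvDeg n d) = 1 := by
    rw [OS.OSinvDeg_eq_span_singleton (hd.imp_right Eq.ge)]
    exact finrank_span_singleton (OS.orbitSum_path_ne_zero (by omega))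
  refine ⟨finrank_eq_one (.inl rfl), fun d hd hdn => ?_, finrank_eq_one (.inr rfl),
    fun d => OS.OSinvDeg_eq_bot⟩
  obtain ⟨d, rfl⟩ := Nat.exists_eq_add_of_le' hd
  rw [OS.OSinvDeg_succ_eq_span_pair, ← Matrix.range_cons_cons_empty,
    finrank_span_eq_card (OS.linearIndependent_orbitSum (by omega)), Fintype.card_fin]

end
end

section
/- For every integer n ≥ 3, the elements a·m and c of OS_n are linearly independent over ℚ. -/
noncomputable section

/-!
Send `e_{ij}` to the image of a vector `w_{ij}` in an exterior algebra. The Orlik–Solomon relation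
of a triangle then reads `(w_{ik} − w_{ij}) ∧ (w_{jk} − w_{ij}) = 0`: the three vectors must be
affinely collinear, which is automatic when two of them coincide.

Weighting the edges through `n+1` by `y` and all other edges by `x` sends `c` to a nonzero multiple
of `x ∧ y`, so `c ≠ 0`. Weighting `{1,2}` by `x`, the disjoint edge `{3,n+1}` by `y` and all other
edges by `0` sends `a·m` to `x ∧ y` and kills `c`, so `a·m` is not a multiple of `c`.
-/

section ExteriorAlgebra

open ExteriorAlgebra (ι ι_sq_zero ι_add_mul_swap ιMulti_apply liftAlternating_apply_ιMulti)

lemma ι_mul_ι_sub_add_eq_zero_of_collinear {K M : Type*} [Field K] [AddCommGroup M] [Module K M]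
    {a b c : M} (h : Collinear K {a, b, c}) :
    ι K b * ι K c - ι K a * ι K c + ι K a * ι K b = 0 := by
  obtain ⟨v, hv⟩ := (collinear_iff_of_mem (Set.mem_insert a {b, c})).mp h
  obtain ⟨r, rfl⟩ := hv b (by simp)
  obtain ⟨s, rfl⟩ := hv c (by simp)
  have swap : ι K v * ι K a = -(ι K a * ι K v) := eq_neg_of_add_eq_zero_left (ι_add_mul_swap v a)
  simp only [vadd_eq_add, map_add, map_smul, add_mul, mul_add, smul_mul_assoc, mul_smul_comm,
    ι_sq_zero, swap]
  module

lemma ι_mul_ι_ne_zero_of_alternatingMap {R M N : Type*} [CommRing R] [AddCommGroup M] [Module R M]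
    [AddCommGroup N] [Module R N] (f : M [⋀^Fin 2]→ₗ[R] N) {x y : M} (h : f ![x, y] ≠ 0) :
    ι R x * ι R y ≠ 0 := by
  intro hxy
  have hf := liftAlternating_apply_ιMulti (Pi.single 2 f) ![x, y]
  exact h (by simpa [ιMulti_apply, hxy] using hf.symm)

lemma ι_single_zero_mul_ι_single_one_ne_zero {R : Type*} [CommRing R] [Nontrivial R] :
    ι R (Pi.single 0 1 : Fin 2 → R) * ι R (Pi.single 1 1) ≠ 0 :=
  ι_mul_ι_ne_zero_of_alternatingMap Matrix.detRowAlternating <| by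
    change (Matrix.of ![Pi.single 0 1, Pi.single 1 1]).det ≠ 0
    simp [Matrix.det_fin_two]

end ExteriorAlgebra

section Weights

variable {α M : Type*}

/-- A weighting `w` of the edges of the complete graph on `α` by vectors is triangle-collinear when
the three weights on every triangle are affinely collinear; these are the weightings that define
maps out of the Orlik–Solomon algebra. The values of `w` on the diagonal play no role. -/
def TriangleCollinear (K : Type*) [DivisionRing K] [AddCommGroup M] [Module K M]
    (w : Sym2 α → M) : Prop :=
  ∀ i j k : α, i ≠ j → j ≠ k → i ≠ k → Collinear K {w s(i, j), w s(i, k), w s(j, k)}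

lemma triangleCollinear_of_isosceles {K : Type*} [DivisionRing K] [AddCommGroup M] [Module K M]
    {w : Sym2 α → M} (hw : ∀ i j k : α, i ≠ j → j ≠ k → i ≠ k →
      w s(i, j) = w s(i, k) ∨ w s(i, j) = w s(j, k) ∨ w s(i, k) = w s(j, k)) :
    TriangleCollinear K w := by
  intro i j k hij hjk hik
  rcases hw i j k hij hjk hik with h | h | h <;> simp [h, collinear_pair]

variable [DecidableEq α]

/-- The weighting by `y` of the edges through the vertex `v`, and by `x` of all others. -/
def coneWeight (v : α) (x y : M) (e : Sym2 α) : M :=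
  if v ∈ e then y else x

/-- The weighting by `x` of the edge `e`, by `y` of the edge `f`, and by `0` of all others. -/
def edgePairWeight [Zero M] (e f : Sym2 α) (x y : M) (s : Sym2 α) : M :=
  if s = e then x else if s = f then y else 0

lemma edgePairWeight_castSucc_castSucc [Zero M] {n : ℕ} (p q r i j : Fin n) (x y : M) :
    edgePairWeight s(p.castSucc, q.castSucc) s(r.castSucc, Fin.last n) x y
      s(i.castSucc, j.castSucc) = if s(i, j) = s(p, q) then x else 0 := by
  simp [edgePairWeight]

lemma edgePairWeight_castSucc_last [Zero M] {n : ℕ} (p q r i : Fin n) (x y : M) :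
    edgePairWeight s(p.castSucc, q.castSucc) s(r.castSucc, Fin.last n) x y
      s(i.castSucc, Fin.last n) = if i = r then y else 0 := by
  simp [edgePairWeight, (Fin.castSucc_ne_last _).symm]

variable {K : Type*} [DivisionRing K] [AddCommGroup M] [Module K M]

lemma triangleCollinear_coneWeight (v : α) (x y : M) : TriangleCollinear K (coneWeight v x y) :=
  triangleCollinear_of_isosceles fun i j k _ _ _ => by
    simp only [coneWeight, Sym2.mem_iff]
    grind

lemma triangleCollinear_edgePairWeight {e f : Sym2 α} (hef : ∀ v ∈ e, v ∉ f) (x y : M) :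
    TriangleCollinear K (edgePairWeight e f x y) :=
  triangleCollinear_of_isosceles fun i j k _ _ _ => by
    induction e with | _ p q
    induction f with | _ r s
    simp only [Sym2.mem_iff] at hef
    simp only [edgePairWeight, Sym2.eq_iff]
    grind

lemma triangleCollinear_edgePairWeight_castSucc {n : ℕ} {p q r : Fin n}
    (hpr : p ≠ r) (hqr : q ≠ r) (x y : M) :
    TriangleCollinear K
      (edgePairWeight s(p.castSucc, q.castSucc) s(r.castSucc, Fin.last n) x y) :=
  triangleCollinear_edgePairWeight (by simp [hpr, hqr]) x y

end Weights

section WeightHom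

open ExteriorAlgebra (ι)

variable {n : ℕ} {M : Type*} [AddCommGroup M] [Module ℚ M]

/-- The algebra map from the Orlik–Solomon algebra to an exterior algebra that sends each generator
`e_{ij}` to the weight `w s(i, j)`. -/
def weightHom (w : Sym2 (Fin (n + 1)) → M) (hw : TriangleCollinear ℚ w) :
    OS n →ₐ[ℚ] ExteriorAlgebra ℚ M :=
  RingQuot.liftAlgHom ℚ
    ⟨ExteriorAlgebra.map (Finsupp.linearCombination ℚ fun e : OSidx n => w e), by
      rintro _ _ ⟨i, j, k, hij, hjk, hik⟩
      simpa [eAmb] using ι_mul_ι_sub_add_eq_zero_of_collinear (hw i j k hij hjk hik)⟩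

variable (w : Sym2 (Fin (n + 1)) → M) (hw : TriangleCollinear ℚ w)

lemma weightHom_eOS {i j : Fin (n + 1)} (hij : i ≠ j) :
    weightHom w hw (eOS n i j) = ι ℚ (w s(i, j)) := by
  simp [weightHom, eOS, eAmb, hij]

lemma weightHom_aOS :
    weightHom w hw (aOS n) = ι ℚ (∑ p : Fin n × Fin n with p.1 < p.2,
      w s(p.1.castSucc, p.2.castSucc)) := by
  rw [aOS, map_sum, map_sum]
  refine Finset.sum_congr rfl fun p hp => weightHom_eOS w hw ?_
  simpa using (Finset.mem_filter.mp hp).2.ne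

lemma weightHom_mOS :
    weightHom w hw (mOS n) = ι ℚ (∑ i : Fin n, w s(i.castSucc, Fin.last n)) := by
  simp [mOS, weightHom_eOS]

lemma weightHom_cOS :
    weightHom w hw (cOS n) = ∑ p : Fin n × Fin n with p.1 < p.2,
      ι ℚ (w s(p.1.castSucc, p.2.castSucc)) *
        ι ℚ (w s(p.1.castSucc, Fin.last n) + w s(p.2.castSucc, Fin.last n)) := by
  rw [cOS, map_sum]
  refine Finset.sum_congr rfl fun p hp => ?_
  have hne : p.1.castSucc ≠ p.2.castSucc := by simpa using (Finset.mem_filter.mp hp).2.ne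
  simp [weightHom_eOS, hne, mul_add]

end WeightHom

section Evaluation

open ExteriorAlgebra (ι)

variable {n : ℕ} {M : Type*} [AddCommGroup M] [Module ℚ M] (x y : M)

lemma weightHom_coneWeight_cOS :
    weightHom (coneWeight (Fin.last n) x y) (triangleCollinear_coneWeight _ x y) (cOS n) =
      (2 * (({p : Fin n × Fin n | p.1 < p.2} : Finset _).card : ℚ)) • (ι ℚ x * ι ℚ y) := by
  have hbase (i j : Fin n) : coneWeight (Fin.last n) x y s(i.castSucc, j.castSucc) = x := by
    simp [coneWeight, (Fin.castSucc_ne_last _).symm]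
  have hcone (i : Fin n) : coneWeight (Fin.last n) x y s(i.castSucc, Fin.last n) = y := by
    simp [coneWeight]
  simp only [weightHom_cOS, hbase, hcone, map_add, mul_add, Finset.sum_const]
  module

lemma cOS_ne_zero (hn : 2 ≤ n) : cOS n ≠ 0 := by
  have pairs_nonempty : ({p : Fin n × Fin n | p.1 < p.2} : Finset _).Nonempty :=
    ⟨(⟨0, by omega⟩, ⟨1, by omega⟩), by simp⟩
  intro hc
  have himage := weightHom_coneWeight_cOS (n := n) (Pi.single 0 1 : Fin 2 → ℚ) (Pi.single 1 1)
  rw [hc, map_zero] at himage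
  refine smul_ne_zero ?_ ι_single_zero_mul_ι_single_one_ne_zero himage.symm
  simpa using pairs_nonempty.ne_empty

variable {p q r : Fin n}

lemma weightHom_edgePairWeight_aOS_mul_mOS (hpq : p < q) (hpr : p ≠ r) (hqr : q ≠ r) :
    weightHom _ (triangleCollinear_edgePairWeight_castSucc hpr hqr x y) (aOS n * mOS n) =
      ι ℚ x * ι ℚ y := by
  have hsum : ∑ t : Fin n × Fin n with t.1 < t.2, (if s(t.1, t.2) = s(p, q) then x else 0) = x := by
    rw [Finset.sum_eq_single_of_mem (p, q) (by simpa using hpq), if_pos rfl]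
    rintro ⟨i, j⟩ hij hne
    simp only [Finset.mem_filter_univ] at hij
    grind [Sym2.eq_iff]
  simp only [map_mul, weightHom_aOS, weightHom_mOS, edgePairWeight_castSucc_castSucc,
    edgePairWeight_castSucc_last, hsum, Finset.sum_ite_eq', Finset.mem_univ, if_true]

lemma weightHom_edgePairWeight_cOS (hpr : p ≠ r) (hqr : q ≠ r) :
    weightHom _ (triangleCollinear_edgePairWeight_castSucc hpr hqr x y) (cOS n) = 0 := by
  rw [weightHom_cOS]
  refine Finset.sum_eq_zero fun t _ => ?_
  rw [edgePairWeight_castSucc_castSucc, edgePairWeight_castSucc_last, edgePairWeight_castSucc_last]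
  by_cases hpq : s(t.1, t.2) = s(p, q)
  · have hr : t.1 ≠ r ∧ t.2 ≠ r := by grind [Sym2.eq_iff]
    simp [hr]
  · simp [hpq]

end Evaluation

/-- For every integer `n ≥ 3`, the elements `a·m` and `c` of `OS_n` are
linearly independent over `ℚ`. -/
theorem am_c_linearIndependent (n : ℕ) (hn : 3 ≤ n) :
    LinearIndependent ℚ ![aOS n * mOS n, cOS n] := by
  refine LinearIndependent.pair_symm_iff.mpr ((LinearIndependent.pair_iff' ?_).mpr ?_)
  · exact cOS_ne_zero (by omega)
  intro t htc
  have hpq : (⟨0, by omega⟩ : Fin n) < ⟨1, by omega⟩ := by simp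
  have hpr : (⟨0, by omega⟩ : Fin n) ≠ ⟨2, by omega⟩ := by simp
  have hqr : (⟨1, by omega⟩ : Fin n) ≠ ⟨2, by omega⟩ := by simp
  refine ι_single_zero_mul_ι_single_one_ne_zero (R := ℚ) ?_
  rw [← weightHom_edgePairWeight_aOS_mul_mOS _ _ hpq hpr hqr, ← htc, map_smul,
    weightHom_edgePairWeight_cOS _ _ hpr hqr, smul_zero]

end
end
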